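/- arXiv:1807.03883 — 6 statements merged into one kernel-verified Lean document; each statement's English description precedes it below -/
import Mathlib

section
/- Let p be a prime with p ≡ 1 or 3 (mod 8), and write p = c² + 2d² with c, d integers. For each integer k ≥ 2 set β_k(p) = (c + d√−2)^(k−1) + (c − d√−2)^(k−1), an integer. Then for all integers k ≥ 2 and r ≥ 1: β_k(p)^r ≡ β_{r(k−1)+1}(p) (mod p^(k−1)). -/
/-!
With `A, B = (c ± d√-2)^(k-1)` one has `A + B = β k`, `A ^ r + B ^ r = β (r(k-1)+1)` and
`A * B = p ^ (k-1)`. The power sums `T r = A ^ r + B ^ r` satisfy the recurrence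
`T (r+2) = T 1 * T (r+1) - A * B * T r`, which modulo `A * B` reads `T (r+2) ≡ T 1 * T (r+1)`;
hence `T r ≡ T 1 ^ r` for all `r ≥ 1`.
-/

/-- Integral power sums of two complex numbers with integral product `q` satisfy
`T 1 ^ r ≡ T r` modulo `q`, for positive exponents. The index is shifted because `T 0 = 2`
does not satisfy the congruence, and no value of `T` at `0` is assumed. -/
lemma pow_modEq_powerSum (A B : ℂ) (q : ℤ) (hq : A * B = q) (T : ℕ → ℤ)
    (hT : ∀ n, (T (n + 1) : ℂ) = A ^ (n + 1) + B ^ (n + 1)) (n : ℕ) :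
    T 1 ^ (n + 1) ≡ T (n + 1) [ZMOD q] := by
  have h1 : (T 1 : ℂ) = A + B := by simpa using hT 0
  induction n with
  | zero => simp
  | succ n ih =>
    have hrec : T 1 * T (n + 1) ≡ T (n + 2) [ZMOD q] := by
      rw [Int.modEq_iff_dvd]
      -- The power sum `A ^ n + B ^ n` is `2` for `n = 0` and `T n` otherwise.
      rcases n with _ | m
      · refine ⟨-2, ?_⟩
        have h2 := hT 1
        have : ((T 2 - T 1 * T 1 : ℤ) : ℂ) = ((q * (-2) : ℤ) : ℂ) := by
          push_cast
          rw [h2, h1, ← hq]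
          ring
        exact_mod_cast this
      · refine ⟨-T (m + 1), ?_⟩
        have : ((T (m + 3) - T 1 * T (m + 2) : ℤ) : ℂ) = ((q * (-T (m + 1)) : ℤ) : ℂ) := by
          push_cast
          rw [hT (m + 2), hT (m + 1), hT m, h1, ← hq]
          ring
        exact_mod_cast this
    calc T 1 ^ (n + 1 + 1) = T 1 * T 1 ^ (n + 1) := by ring
      _ ≡ T 1 * T (n + 1) [ZMOD q] := ih.mul_left _
      _ ≡ T (n + 2) [ZMOD q] := hrec

/-- Corollary 1.7 (case `p ≡ 1, 3 (mod 8)`): `β_k(p)^r ≡ β_{r(k−1)+1}(p) (mod p^(k−1))`. -/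
theorem beta_pow_congruence (p : ℕ) (hp : p.Prime) (hp8 : p % 8 = 1 ∨ p % 8 = 3)
    (c d : ℤ) (hcd : (p : ℤ) = c ^ 2 + 2 * d ^ 2)
    (β : ℕ → ℤ)
    (hβ : ∀ k, 2 ≤ k → (β k : ℂ) =
      ((c : ℂ) + d * (Complex.I * Real.sqrt 2)) ^ (k - 1) +
      ((c : ℂ) - d * (Complex.I * Real.sqrt 2)) ^ (k - 1))
    (k r : ℕ) (hk : 2 ≤ k) (hr : 1 ≤ r) :
    β k ^ r ≡ β (r * (k - 1) + 1) [ZMOD (p : ℤ) ^ (k - 1)] := by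
  obtain ⟨m, rfl⟩ : ∃ m, k = m + 2 := ⟨k - 2, by omega⟩
  obtain ⟨n, rfl⟩ : ∃ n, r = n + 1 := ⟨r - 1, by omega⟩
  have hs : ((Real.sqrt 2 : ℝ) : ℂ) ^ 2 = 2 := by
    rw [← Complex.ofReal_pow, Real.sq_sqrt (by norm_num)]
    norm_num
  have hp' : ((c : ℂ) + d * (Complex.I * Real.sqrt 2)) *
      ((c : ℂ) - d * (Complex.I * Real.sqrt 2)) = (p : ℂ) := by
    have h : (p : ℂ) = (c : ℂ) ^ 2 + 2 * (d : ℂ) ^ 2 := by exact_mod_cast hcd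
    rw [h]
    linear_combination (-(d : ℂ) ^ 2 * (Real.sqrt 2 : ℝ) ^ 2) * Complex.I_sq + (d : ℂ) ^ 2 * hs
  have key := pow_modEq_powerSum
    (((c : ℂ) + d * (Complex.I * Real.sqrt 2)) ^ (m + 1))
    (((c : ℂ) - d * (Complex.I * Real.sqrt 2)) ^ (m + 1)) ((p : ℤ) ^ (m + 1))
    (by rw [← mul_pow, hp']; push_cast; rfl) (fun j => β (j * (m + 1) + 1))
    (fun j => by
      have h2 : 2 ≤ (j + 1) * (m + 1) + 1 := by nlinarith
      rw [hβ _ h2, Nat.add_sub_cancel, ← pow_mul, ← pow_mul, mul_comm (j + 1)]) n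
  simpa using key
end

section
/- Let p > 3 be a prime with p ≡ 1 (mod 6), and write p = a² + 3b² with a, b integers, a ≡ 1 (mod 3), b > 0. Then for every integer r ≥ 1: C((p^r − 1)/2) ≡ (a + b√−3)^(2r) + (a − b√−3)^(2r) (mod p), where the right-hand side is the integer γ_{2r+1}(p). -/
/-!
All congruences are modulo `p = 6n + 1`, and `m = (p - 1) / 2 = 3n`.

By Lucas' theorem `C((p ^ r - 1) / 2) ≡ C(m) ^ r` (`apC_pow`). On the other side `γ_{2r+1}(p) ≡
(4a²) ^ r` (`trace_pow`), because `(a + b√-3)²` and its conjugate have product `p²` and sum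
congruent to `4a²`. So the claim reduces to `C(m) ≡ 4a²`.

Let `h(X) = ∑ binom(m,k)² X ^ k`. Since `m ≡ -1/2`, Clausen's formula for `₃F₂(1/2, 1/2, 1/2; 1, 1;
4 z (1 - z))` survives as an identity of polynomials over `𝔽_p` (`clausen`): `h(z)² = ∑ binom(m,k)²
binom(2k,k) (z (1 - z)) ^ k`. It is proved by comparing differential equations. At a primitive sixth
root of unity `z` in `𝔽_p` one has `z (1 - z) = 1`, so `C(m) ≡ h(z)²`.

Up to sign, `h(z)` is the sum of `(x (x - 1) (x - z)) ^ m` over `𝔽_p`. For this `z` the Legendre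
curve is a translate of `y² = x³ + s³`, whose sum is `± s ^ (3n) binom(3n, n)`; hence `h(z)² ≡
binom(3n, n)²` (`legH_sq`).

Finally `binom(3n, n)² ≡ 4a²` is a form of the theorem of Gauss and Jacobi. The Jacobi sum of a
cubic and the quadratic character produces a representation `p = c² + 3d²` with `(2c)² ≡ binom(3n,
n)²` (`jacobi_int`), and `c² = a²` by uniqueness of such representations (`sq_unique`).
-/

/-- Zagier's sporadic Apéry-like sequence `C(n) = ∑_{k=0}^{n} C(n,k)² C(2k,k)`. -/
def apC (n : ℕ) : ℤ :=
  ∑ k ∈ Finset.range (n + 1), (n.choose k : ℤ) ^ 2 * ((2 * k).choose k : ℤ)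

namespace ApC

open Polynomial
open scoped QuadraticAlgebra

/-! ### Power sums over the prime field -/

/-- Up to exponent `2p - 3`, only `x ^ (p - 1)` has a nonzero power sum over `𝔽_p`; the bound
excludes the next exceptional exponent `2(p - 1)`, and `x ^ 0` sums to `p = 0`. -/
theorem sum_pow_zmod {p : ℕ} [Fact p.Prime] {i : ℕ} (hi : i < 2 * (p - 1)) :
    ∑ x : ZMod p, x ^ i = if i = p - 1 then -1 else 0 := by
  have hp := (Fact.out : p.Prime).two_le
  have key : ∀ j, j < p - 1 → ∑ x : ZMod p, x ^ j = 0 := fun j hj =>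
    FiniteField.sum_pow_lt_card_sub_one (ZMod p) j (by rwa [ZMod.card])
  have shift : ∀ j, 0 < j → ∑ x : ZMod p, x ^ (j + (p - 1)) = ∑ x : ZMod p, x ^ j := by
    intro j hj
    refine Finset.sum_congr rfl fun x _ => ?_
    rcases eq_or_ne x 0 with rfl | hx
    · rw [zero_pow (by omega), zero_pow (by omega)]
    · rw [pow_add, ZMod.pow_card_sub_one_eq_one hx, mul_one]
  split_ifs with h
  · subst h
    rw [Finset.sum_eq_sum_sdiff_singleton_add (Finset.mem_univ (0 : ZMod p)),
      zero_pow (by omega), add_zero,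
      Finset.sum_congr rfl (g := fun _ => 1) fun x hx =>
        ZMod.pow_card_sub_one_eq_one (by simpa using hx)]
    simp [Finset.card_sdiff, ZMod.card, Nat.cast_sub (show 1 ≤ p by omega)]
  · rcases lt_or_ge i (p - 1) with h' | h'
    · exact key i h'
    · obtain ⟨j, rfl⟩ := Nat.exists_eq_add_of_le' h'
      rw [shift j (by omega)]
      exact key j (by omega)

/-- Summing a polynomial of small degree over `𝔽_p` extracts its coefficient of degree `p - 1`. This
turns character sums into binomial coefficients modulo `p`. -/
theorem sum_eval_zmod {p : ℕ} [Fact p.Prime] (f : (ZMod p)[X]) (hf : f.natDegree < 2 * (p - 1)) :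
    ∑ x : ZMod p, f.eval x = -f.coeff (p - 1) := by
  have hp := (Fact.out : p.Prime).two_le
  simp_rw [eval_eq_sum_range' hf]
  rw [Finset.sum_comm]
  simp_rw [← Finset.mul_sum]
  rw [Finset.sum_congr rfl fun i hi => by rw [sum_pow_zmod (Finset.mem_range.mp hi)]]
  simp only [mul_ite, mul_neg, mul_one, mul_zero, Finset.sum_ite_eq', Finset.mem_range]
  rw [if_pos (by omega)]

/-! ### Lucas congruences -/

theorem sum_range_mul_digits {M : Type*} [AddCommMonoid M] (f : ℕ → M) (a b : ℕ) :
    ∑ k ∈ Finset.range (a * b), f k =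
      ∑ i ∈ Finset.range b, ∑ j ∈ Finset.range a, f (j + a * i) := by
  induction b with
  | zero => simp
  | succ b ih =>
    rw [Nat.mul_succ, Finset.sum_range_add, ih, Finset.sum_range_succ]
    simp only [add_comm]

/-- Lucas' theorem with the last base-`p` digit split off. -/
theorem choose_digits {p : ℕ} [Fact p.Prime] {a b : ℕ} (A B : ℕ) (ha : a < p) (hb : b < p) :
    (((a + p * A).choose (b + p * B) : ℕ) : ZMod p) = a.choose b * A.choose B := by
  have h := Choose.choose_modEq_choose_mod_mul_choose_div_nat
    (n := a + p * A) (k := b + p * B) (p := p)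
  have hp := (Fact.out : p.Prime).pos
  rw [Nat.add_mul_mod_self_left, Nat.add_mul_mod_self_left, Nat.mod_eq_of_lt ha,
    Nat.mod_eq_of_lt hb, Nat.add_mul_div_left _ _ hp, Nat.add_mul_div_left _ _ hp,
    Nat.div_eq_of_lt ha, Nat.div_eq_of_lt hb, zero_add, zero_add] at h
  exact_mod_cast (ZMod.natCast_eq_natCast_iff _ _ _).mpr h

/-- `C` is multiplicative on base-`p` digits when the last digit is `m = (p - 1) / 2`. The terms
with `k % p > m` vanish because of `m.choose (k % p)`, and for the others doubling `k` causes no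
carry. -/
theorem apC_digits {p m : ℕ} [Fact p.Prime] (hm : p = 2 * m + 1) (N : ℕ) :
    (apC (m + p * N) : ZMod p) = apC m * apC N := by
  have ext1 : (apC (m + p * N) : ZMod p) = ∑ k ∈ Finset.range (p * (N + 1)),
      ((m + p * N).choose k : ZMod p) ^ 2 * ((2 * k).choose k : ZMod p) := by
    rw [apC]
    push_cast
    refine Finset.sum_subset (Finset.range_subset_range.mpr (by rw [mul_add]; omega)) ?_
    intro k _ hk
    rw [Nat.choose_eq_zero_of_lt (by simpa using hk)]
    simp
  have ext2 : (apC m : ZMod p) = ∑ k ∈ Finset.range p,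
      (m.choose k : ZMod p) ^ 2 * ((2 * k).choose k : ZMod p) := by
    rw [apC]
    push_cast
    refine Finset.sum_subset (Finset.range_subset_range.mpr (by omega)) ?_
    intro k _ hk
    rw [Nat.choose_eq_zero_of_lt (by simpa using hk)]
    simp
  rw [ext1, ext2, sum_range_mul_digits, apC, Int.cast_sum, Finset.sum_mul_sum, Finset.sum_comm]
  refine Finset.sum_congr rfl fun j hj => Finset.sum_congr rfl fun i _ => ?_
  rw [Finset.mem_range] at hj
  rw [choose_digits _ _ (by omega) hj]
  rcases le_or_gt j m with hjm | hjm
  · rw [show 2 * (j + p * i) = 2 * j + p * (2 * i) by ring, choose_digits _ _ (by omega) hj]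
    push_cast
    ring
  · rw [Nat.choose_eq_zero_of_lt hjm]
    simp

/-- In base `p`, all `r` digits of `(p ^ r - 1) / 2` equal `(p - 1) / 2`. -/
theorem apC_pow {p m : ℕ} [Fact p.Prime] (hm : p = 2 * m + 1) (r : ℕ) :
    (apC ((p ^ r - 1) / 2) : ZMod p) = (apC m : ZMod p) ^ r := by
  induction r with
  | zero => simp [apC]
  | succ r ih =>
    have hodd : p ^ r % 2 = 1 := Nat.odd_iff.mp (Odd.pow ⟨m, hm⟩)
    have : (p ^ (r + 1) - 1) / 2 = m + p * ((p ^ r - 1) / 2) := by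
      obtain ⟨t, ht⟩ : ∃ t, p ^ r = 2 * t + 1 := ⟨p ^ r / 2, by omega⟩
      have h1 : p ^ (r + 1) = 2 * (m + p * t) + 1 := by
        rw [pow_succ, ht]; nlinarith
      have h2 : (p ^ r - 1) / 2 = t := by omega
      rw [h2]; omega
    rw [this, apC_digits hm, ih, pow_succ, mul_comm]

/-! ### Clausen's formula modulo a prime -/

/-- The Euler operator `θ = X · d/dX`, which multiplies the `k`-th coefficient by `k`. -/
noncomputable def eulerOp {R : Type*} [CommRing R] (f : R[X]) : R[X] := X * derivative f

theorem coeff_eulerOp {R : Type*} [CommRing R] (f : R[X]) (k : ℕ) :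
    (eulerOp f).coeff k = k * f.coeff k := by
  cases k with
  | zero => simp [eulerOp]
  | succ k => rw [eulerOp, coeff_X_mul, coeff_derivative]; push_cast; ring

/-- The truncated hypergeometric series `h = ∑ binom(m,k)² X ^ k`. When `2m + 1 = 0` it is
`₂F₁(1/2, 1/2; 1; X)`, the Hasse polynomial of the Legendre family up to sign. -/
noncomputable def legH (m : ℕ) (R : Type*) [CommRing R] : R[X] :=
  ∑ k ∈ Finset.range (m + 1), C ((m.choose k : R) ^ 2) * X ^ k

/-- The polynomial `G = ∑ binom(m,k)² binom(2k,k) X ^ k`, whose value at `1` is `C(m)`. When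
`2m + 1 = 0` it is the truncation of `₃F₂(1/2, 1/2, 1/2; 1, 1; 4X)`. -/
noncomputable def legG (m : ℕ) (R : Type*) [CommRing R] : R[X] :=
  ∑ k ∈ Finset.range (m + 1), C ((m.choose k : R) ^ 2 * (k.centralBinom : R)) * X ^ k

theorem coeff_legH (m : ℕ) (R : Type*) [CommRing R] (k : ℕ) :
    (legH m R).coeff k = (m.choose k : R) ^ 2 := by
  simp only [legH, finsetSum_coeff, coeff_C_mul_X_pow, Finset.sum_ite_eq, Finset.mem_range]
  split_ifs with h
  · rfl
  · rw [Nat.choose_eq_zero_of_lt (by omega)]; simp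

theorem coeff_legG (m : ℕ) (R : Type*) [CommRing R] (k : ℕ) :
    (legG m R).coeff k = (m.choose k : R) ^ 2 * (k.centralBinom : R) := by
  simp only [legG, finsetSum_coeff, coeff_C_mul_X_pow, Finset.sum_ite_eq, Finset.mem_range]
  split_ifs with h
  · rfl
  · rw [Nat.choose_eq_zero_of_lt (by omega)]; simp

/-- Modulo `2m + 1` the parameter `m` is `-1/2`, so the ratio of consecutive binomial coefficients
is that of `(1/2)_k / k!`, up to sign. -/
theorem choose_step {m : ℕ} {R : Type*} [CommRing R] (hm : (2 * m + 1 : R) = 0) (k : ℕ) :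
    2 * (k + 1 : R) * m.choose (k + 1) = -(2 * k + 1) * m.choose k := by
  have h : ((k + 1 : R)) * m.choose (k + 1) = (m - k) * m.choose k := by
    rcases le_or_gt k m with h | h
    · have := Nat.choose_succ_right_eq m k
      rw [← Nat.cast_sub h]
      have := congrArg (Nat.cast : ℕ → R) this
      push_cast at this
      linear_combination this
    · rw [Nat.choose_eq_zero_of_lt h, Nat.choose_eq_zero_of_lt (by omega)]; simp
  linear_combination 2 * h + (m.choose k : R) * hm

/-- The Gauss equation, obtained from `4 θ² h = X (2θ + 1)² h` by cancelling `X`. -/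
theorem legH_ode {m : ℕ} {R : Type*} [CommRing R] (hm : (2 * m + 1 : R) = 0) :
    4 * (X - X ^ 2) * derivative (derivative (legH m R)) +
      4 * (1 - 2 * X) * derivative (legH m R) - legH m R = 0 := by
  have h : 4 * eulerOp (eulerOp (legH m R)) = X * (4 * eulerOp (eulerOp (legH m R))
      + 4 * eulerOp (legH m R) + legH m R) := by
    ext k
    cases k with
    | zero => simp [mul_coeff_zero, coeff_eulerOp]
    | succ k =>
      have := choose_step hm k
      simp only [coeff_X_mul, coeff_add, coeff_ofNat_mul, coeff_eulerOp, coeff_legH]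
      push_cast
      linear_combination (2 * (k + 1 : R) * m.choose (k + 1) - (2 * k + 1) * m.choose k) * this
  have h2 : X * (4 * (X - X ^ 2) * derivative (derivative (legH m R)) +
      4 * (1 - 2 * X) * derivative (legH m R) - legH m R) = 0 := by
    simp only [eulerOp, derivative_mul, derivative_X, one_mul] at h
    linear_combination h
  ext k
  simpa [coeff_X_mul] using congrArg (fun f => f.coeff (k + 1)) h2

/-- The third-order equation obtained from `2 θ³ G = X (2θ + 1)³ G` by cancelling `X`. -/
theorem legG_ode {m : ℕ} {R : Type*} [CommRing R] (hm : (2 * m + 1 : R) = 0) :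
    2 * (X ^ 2 * (1 - 4 * X)) * derivative (derivative (derivative (legG m R))) +
      2 * (3 * X - 18 * X ^ 2) * derivative (derivative (legG m R)) +
      2 * (1 - 13 * X) * derivative (legG m R) - legG m R = 0 := by
  have h : 2 * eulerOp (eulerOp (eulerOp (legG m R))) =
      X * (8 * eulerOp (eulerOp (eulerOp (legG m R))) + 12 * eulerOp (eulerOp (legG m R))
      + 6 * eulerOp (legG m R) + legG m R) := by
    ext k
    cases k with
    | zero => simp [mul_coeff_zero, coeff_eulerOp]
    | succ k =>
      have h1 := choose_step hm k
      have h2 := congrArg (Nat.cast : ℕ → R) (Nat.succ_mul_centralBinom_succ k)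
      simp only [coeff_X_mul, coeff_add, coeff_ofNat_mul, coeff_eulerOp, coeff_legG]
      push_cast at h2 ⊢
      linear_combination (2 * (k + 1 : R) ^ 2 * (m.choose (k + 1) : R) ^ 2) * h2 +
        (k.centralBinom : R) * (2 * k + 1) *
          (2 * (k + 1 : R) * m.choose (k + 1) - (2 * k + 1) * m.choose k) * h1
  have h2 : X * (2 * (X ^ 2 * (1 - 4 * X)) * derivative (derivative (derivative (legG m R))) +
      2 * (3 * X - 18 * X ^ 2) * derivative (derivative (legG m R)) +
      2 * (1 - 13 * X) * derivative (legG m R) - legG m R) = 0 := by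
    simp only [eulerOp, derivative_mul, derivative_add, derivative_X, one_mul] at h
    linear_combination h
  ext k
  simpa [coeff_X_mul] using congrArg (fun f => f.coeff (k + 1)) h2

/-- The symmetric square of the operator in `legH_ode`: it kills products of two solutions. -/
noncomputable def symSq {R : Type*} [CommRing R] (w : R[X]) : R[X] :=
  2 * (X - X ^ 2) ^ 2 * derivative (derivative (derivative w)) +
    6 * (X - X ^ 2) * (1 - 2 * X) * derivative (derivative w) +
    2 * (1 - 7 * X + 7 * X ^ 2) * derivative w - (1 - 2 * X) * w

theorem symSq_sub {R : Type*} [CommRing R] (u v : R[X]) : symSq (u - v) = symSq u - symSq v := by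
  simp only [symSq, derivative_sub]; ring

theorem symSq_legH {p m : ℕ} [Fact p.Prime] (hm : p = 2 * m + 1) :
    symSq (legH m (ZMod p) ^ 2) = 0 := by
  have hz : (2 * m + 1 : ZMod p) = 0 := by
    exact_mod_cast (ZMod.natCast_eq_zero_iff (2 * m + 1) p).mpr (dvd_of_eq hm)
  have hC : (C 2 : (ZMod p)[X]) = 2 := rfl
  have h := legH_ode hz
  have h' := congrArg derivative h
  set y := legH m (ZMod p)
  simp only [derivative_add, derivative_sub, derivative_mul, derivative_X, derivative_one,
    derivative_ofNat, derivative_X_pow, derivative_zero] at h'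
  simp only [symSq, pow_two y, derivative_add, derivative_mul]
  norm_num [hC] at h' ⊢
  linear_combination (X - X ^ 2) * y * h' + (3 * (X - X^2) * derivative y + (1 - 2 * X) * y) * h

/-- Substituting `X - X²` turns the third-order equation for `G` into the symmetric square equation.
-/
theorem symSq_legG {p m : ℕ} [Fact p.Prime] (hm : p = 2 * m + 1) :
    symSq ((legG m (ZMod p)).comp (X - X ^ 2)) = 0 := by
  have hz : (2 * m + 1 : ZMod p) = 0 := by
    exact_mod_cast (ZMod.natCast_eq_zero_iff (2 * m + 1) p).mpr (dvd_of_eq hm)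
  have hC : (C 2 : (ZMod p)[X]) = 2 := rfl
  have h := congrArg (fun f => f.comp (X - X ^ 2)) (legG_ode hz)
  simp only [symSq, derivative_comp, derivative_add, derivative_sub, derivative_mul, derivative_X,
    derivative_one, derivative_X_pow, derivative_zero]
  simp [hC] at h ⊢
  linear_combination (1 - 2 * X) * h

/-- A solution of the symmetric square equation vanishing to order `> k` has no term of degree `k +
1`, unless `2 (k + 1)³ = 0`. The recurrence is the equation multiplied by `X` and expressed through
`θ`. -/
theorem symSq_coeff {R : Type*} [CommRing R] {D : R[X]} (h : symSq D = 0) (k : ℕ)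
    (hk : ∀ j, j ≤ k → D.coeff j = 0) : 2 * (k + 1 : R) ^ 3 * D.coeff (k + 1) = 0 := by
  have h1 : 2 * eulerOp (eulerOp (eulerOp D)) =
      X * (4 * eulerOp (eulerOp (eulerOp D)) + 6 * eulerOp (eulerOp D) + 4 * eulerOp D + D)
      - X * (X * (2 * eulerOp (eulerOp (eulerOp D)) + 6 * eulerOp (eulerOp D)
         + 6 * eulerOp D + 2 * D)) := by
    simp only [symSq] at h
    simp only [eulerOp, derivative_mul, derivative_add, derivative_X, one_mul]
    linear_combination X * h
  have h2 := congrArg (fun f => f.coeff (k + 1)) h1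
  cases k with
  | zero =>
    simp [coeff_X_mul, mul_coeff_zero, coeff_eulerOp, hk 0 le_rfl] at h2 ⊢
    exact h2
  | succ k =>
    simp only [coeff_X_mul, coeff_add, coeff_sub, coeff_ofNat_mul, coeff_eulerOp, hk (k+1) le_rfl,
      hk k (by omega)] at h2
    push_cast at h2 ⊢
    linear_combination h2

/-- Clausen's formula modulo `p = 2m + 1`. The difference of the two sides solves the symmetric
square equation and vanishes at `0`; its degree is at most `p - 1`, so the factor `(k + 1)³` in the
recurrence never vanishes in the range that matters. -/
theorem clausen {p m : ℕ} [Fact p.Prime] (hm : p = 2 * m + 1) :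
    legH m (ZMod p) ^ 2 = (legG m (ZMod p)).comp (X - X ^ 2) := by
  have hpp := (Fact.out : p.Prime)
  rw [← sub_eq_zero]
  set D := legH m (ZMod p) ^ 2 - (legG m (ZMod p)).comp (X - X ^ 2) with hD
  have hL : symSq D = 0 := by rw [hD, symSq_sub, symSq_legH hm, symSq_legG hm, sub_zero]
  have hzero : ∀ k, k < p → ∀ j, j ≤ k → D.coeff j = 0 := by
    intro k
    induction k with
    | zero =>
      intro _ j hj
      obtain rfl : j = 0 := by omega
      simp [hD, coeff_zero_eq_eval_zero, eval_comp]
      simp [← coeff_zero_eq_eval_zero, coeff_legH, coeff_legG]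
    | succ k ih =>
      intro hk j hj
      have ih := ih (by omega)
      rcases Nat.lt_or_ge j (k + 1) with h | h
      · exact ih j (by omega)
      obtain rfl : j = k + 1 := by omega
      have := symSq_coeff hL k ih
      have hk1 : ((k + 1 : ℕ) : ZMod p) ≠ 0 := by
        rw [Ne, ZMod.natCast_eq_zero_iff]
        exact Nat.not_dvd_of_pos_of_lt (by omega) hk
      have h2 : ((2 : ℕ) : ZMod p) ≠ 0 := by
        rw [Ne, ZMod.natCast_eq_zero_iff]
        exact Nat.not_dvd_of_pos_of_lt (by omega) (by have := hpp.two_le; omega)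
      push_cast at hk1 h2
      simpa [hk1, h2] using this
  have dH : (legH m (ZMod p)).natDegree ≤ m := natDegree_le_iff_coeff_eq_zero.mpr fun k hk => by
    rw [coeff_legH, Nat.choose_eq_zero_of_lt hk]; simp
  have dG : (legG m (ZMod p)).natDegree ≤ m := natDegree_le_iff_coeff_eq_zero.mpr fun k hk => by
    rw [coeff_legG, Nat.choose_eq_zero_of_lt hk]; simp
  have dX : (X - X ^ 2 : (ZMod p)[X]).natDegree ≤ 2 := by compute_degree
  have dD : D.natDegree ≤ 2 * m := by
    refine (natDegree_sub_le _ _).trans (max_le ?_ ?_)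
    · exact natDegree_pow_le.trans (by omega)
    · exact natDegree_comp_le.trans ((Nat.mul_le_mul dG dX).trans (by omega))
  ext j
  rcases Nat.lt_or_ge j p with h | h
  · exact hzero j h j le_rfl
  · exact coeff_eq_zero_of_natDegree_lt (by omega)

/-! ### The Legendre curve at a sixth root of unity -/

theorem coeff_X_sub_C_pow' {R : Type*} [CommRing R] (c : R) (m k : ℕ) :
    ((X - C c) ^ m).coeff k = (-c) ^ (m - k) * m.choose k := by
  rw [sub_eq_add_neg, ← C_neg, coeff_X_add_C_pow]

/-- Modulo `p` the left side is minus the Frobenius trace of the Legendre curve `y² = x (x - 1) (x -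
z)`, by Euler's criterion. -/
theorem sum_legendre_cubic {p m : ℕ} [Fact p.Prime] (hm : p = 2 * m + 1) (z : ZMod p) :
    ∑ x : ZMod p, (x * (x - 1) * (x - z)) ^ m = (-1) ^ (m + 1) * (legH m (ZMod p)).eval z := by
  have hm0 : m ≠ 0 := by rintro rfl; exact (Fact.out : p.Prime).one_lt.ne' hm
  have h := sum_eval_zmod (X ^ m * ((X - C 1) ^ m * (X - C z) ^ m) : (ZMod p)[X]) (by
    refine lt_of_le_of_lt (b := m * 1 + (m * 1 + m * 1)) ?_ (by omega)
    refine natDegree_mul_le_of_le (natDegree_pow_le_of_le _ natDegree_X_le)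
      (natDegree_mul_le_of_le (natDegree_pow_le_of_le _ (natDegree_X_sub_C_le _))
        (natDegree_pow_le_of_le _ (natDegree_X_sub_C_le _))))
  rw [show p - 1 = m + m by omega, coeff_X_pow_mul, coeff_mul,
    Finset.Nat.sum_antidiagonal_eq_sum_range_succ_mk] at h
  rw [Finset.sum_congr rfl fun x _ => show (x * (x - 1) * (x - z)) ^ m =
    (X ^ m * ((X - C 1) ^ m * (X - C z) ^ m) : (ZMod p)[X]).eval x by
      simp only [eval_mul, eval_pow, eval_sub, eval_X, eval_C, mul_pow]; ring,
    h, legH, eval_finsetSum,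
    Finset.mul_sum, ← Finset.sum_neg_distrib]
  refine Finset.sum_congr rfl fun k hk => ?_
  have hk : k ≤ m := by rw [Finset.mem_range] at hk; omega
  rw [coeff_X_sub_C_pow', coeff_X_sub_C_pow', show m - (m - k) = k by omega, Nat.choose_symm hk]
  simp only [eval_mul, eval_C, eval_pow, eval_X]
  have h1 : (-1 : ZMod p) ^ m = (-1) ^ k * (-1) ^ (m - k) := by
    rw [← pow_add, Nat.add_sub_cancel' hk]
  rw [neg_pow z k, pow_succ, h1]
  ring

/-- The same sum for the curve `y² = x³ + c`: of the powers of `x` occurring, only `x ^ (6n)`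
contributes. -/
theorem sum_cube_add {p n : ℕ} [Fact p.Prime] (hn : p = 6 * n + 1) (c : ZMod p) :
    ∑ x : ZMod p, (x ^ 3 + c) ^ (3 * n) = -(c ^ n * (3 * n).choose n) := by
  have hn0 : n ≠ 0 := by rintro rfl; exact (Fact.out : p.Prime).one_lt.ne' hn
  have h := sum_eval_zmod (expand (ZMod p) 3 ((X + C c) ^ (3 * n))) (by
    rw [natDegree_expand, natDegree_pow_X_add_C]
    omega)
  rw [show p - 1 = 2 * n * 3 by omega, coeff_expand_mul (by norm_num), coeff_X_add_C_pow,
    show 3 * n - 2 * n = n by omega,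
    Nat.choose_symm_of_eq_add (show 3 * n = 2 * n + n by ring)] at h
  simpa [expand_eval] using h

/-- If `z` is a primitive sixth root of unity, the points `0, 1, z` form an equilateral triangle:
translating `x` by the centroid `s = (1 + z) / 3` turns `x (x - 1) (x - z)` into `x³ + s³`. -/
theorem legH_sq {p n : ℕ} [Fact p.Prime] (hn : p = 6 * n + 1) {z : ZMod p}
    (hz : z ^ 2 - z + 1 = 0) :
    (legH (3 * n) (ZMod p)).eval z ^ 2 = ((3 * n).choose n : ZMod p) ^ 2 := by
  have h3 : (3 : ZMod p) ≠ 0 := by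
    have : ((3 : ℕ) : ZMod p) ≠ 0 := by
      rw [Ne, ZMod.natCast_eq_zero_iff, Nat.prime_dvd_prime_iff_eq Fact.out Nat.prime_three]
      omega
    exact_mod_cast this
  obtain ⟨s, hs⟩ : ∃ s : ZMod p, 3 * s = 1 + z := ⟨(1 + z) / 3, by field_simp⟩
  have hs0 : s ≠ 0 := by
    rintro rfl
    apply h3
    linear_combination (z - 2) * hs + hz
  have h1 := sum_legendre_cubic (m := 3 * n) (by omega) z
  rw [← Equiv.sum_comp (Equiv.addRight s)] at h1
  -- here `s` satisfies `3 s² - 3 s + 1 = 0`, which kills the lower-order terms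
  have hcub : ∀ x : ZMod p, (x + s) * (x + s - 1) * (x + s - z) = x ^ 3 + s ^ 3 := by
    intro x
    have hz' : z = 3 * s - 1 := by linear_combination -hs
    subst hz'
    have h' : 3 * s ^ 2 - 3 * s + 1 = 0 := by
      apply mul_left_cancel₀ h3
      linear_combination hz
    linear_combination (-x) * h' - s * h'
  simp only [Equiv.coe_addRight, hcub] at h1
  rw [sum_cube_add hn] at h1
  have h6 : s ^ (6 * n) = 1 := by
    rw [show 6 * n = p - 1 by omega]; exact ZMod.pow_card_sub_one_eq_one hs0
  have h7 := congrArg (· ^ 2) h1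
  simp only [mul_pow, neg_sq, ← pow_mul] at h7
  rw [mul_comm (3 * n + 1) 2, pow_mul (-1 : ZMod p), neg_one_sq, one_pow, one_mul,
    show 3 * n * 2 = 6 * n by ring, h6, one_mul] at h7
  exact h7.symm

/-! ### The Jacobi sum -/

/-- The ring `ℤ[ω]` of Eisenstein integers, with `ω² + ω + 1 = 0`. -/
abbrev EisInt : Type := QuadraticAlgebra ℤ (-1) (-1)

/-- The ring homomorphism `ℤ[ω] → A` sending `ω` to `w`. -/
noncomputable def eisEval {A : Type*} [CommRing A] (w : A) (hw : w ^ 2 + w + 1 = 0) :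
    EisInt →+* A :=
  (QuadraticAlgebra.lift (R := ℤ) (a := -1) (b := -1) ⟨w, by
    simp only [neg_smul, one_smul]; linear_combination hw⟩).toRingHom

theorem eisEval_apply {A : Type*} [CommRing A] (w : A) (hw : w ^ 2 + w + 1 = 0) (z : EisInt) :
    eisEval w hw z = z.re + z.im * w := by
  simp [eisEval, QuadraticAlgebra.lift]

/-- The cube root of unity `ω`, as a unit of `ℤ[ω]`; its inverse is `ω² = -1 - ω`. -/
def eisOmega : EisIntˣ where
  val := ⟨0, 1⟩
  inv := ⟨-1, -1⟩
  val_inv := by ext <;> simp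
  inv_val := by ext <;> simp

theorem eisOmega_pow_three : eisOmega ^ 3 = 1 := by
  ext <;> simp [eisOmega, pow_succ]

/-- The Jacobi sum `J = J(χ, q)` of a cubic character `χ` and the quadratic character `q` has norm
`p` and even `ω`-coordinate, so `J = (c + d) + 2 d ω` gives `p = c² + 3 d²`. Its trace is `2c`. Of
the two reductions `ℤ[ω] → 𝔽_p`, one kills `J` and the other sends it to `± binom(3n, n)`, whence
`(2c)² ≡ binom(3n, n)²`. -/
theorem jacobi_int {p n : ℕ} [Fact p.Prime] (hn : p = 6 * n + 1) :
    ∃ c d : ℤ, c ^ 2 + 3 * d ^ 2 = p ∧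
      ((2 * c : ℤ) : ZMod p) ^ 2 = ((3 * n).choose n : ZMod p) ^ 2 := by
  have hn0 : n ≠ 0 := by rintro rfl; exact (Fact.out : p.Prime).one_lt.ne' hn
  obtain ⟨g, hg⟩ := IsCyclic.exists_generator (α := (ZMod p)ˣ)
  have hord : orderOf g = p - 1 := by
    rw [orderOf_eq_card_of_forall_mem_zpowers hg, Nat.card_eq_fintype_card, ZMod.card_units]
  have hroot : eisOmega ∈ rootsOfUnity (Fintype.card (ZMod p)ˣ) EisInt := by
    rw [mem_rootsOfUnity, ZMod.card_units, show p - 1 = 3 * (2 * n) by omega, pow_mul,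
      eisOmega_pow_three, one_pow]
  let χ : MulChar (ZMod p) EisInt := MulChar.ofRootOfUnity hroot hg
  have hχg : χ g = eisOmega := MulChar.ofRootOfUnity_spec hroot hg
  have hcases : ∀ x : ZMod p, x ≠ 0 → ∃ i : ℕ, x = (g : ZMod p) ^ i := by
    intro x hx
    obtain ⟨i, hi⟩ := (Submonoid.mem_powers_iff _ _).mp
      (mem_powers_iff_mem_zpowers.mpr (hg (Units.mk0 x hx)))
    exact ⟨i, by simpa using (congrArg Units.val hi).symm⟩
  let w : ZMod p := (g : ZMod p) ^ (2 * n)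
  have hw : w ^ 2 + w + 1 = 0 := by
    have hne : w - 1 ≠ 0 := by
      rw [sub_ne_zero]
      intro h
      have h' : g ^ (2 * n) = 1 := by ext; simpa using h
      have := Nat.le_of_dvd (by omega) (orderOf_dvd_of_pow_eq_one h')
      omega
    have h3 : w ^ 3 = 1 := by
      change ((g : ZMod p) ^ (2 * n)) ^ 3 = 1
      rw [← pow_mul, show 2 * n * 3 = p - 1 by omega]
      exact ZMod.pow_card_sub_one_eq_one g.ne_zero
    apply mul_left_cancel₀ hne
    linear_combination h3
  have hw' : (w ^ 2) ^ 2 + w ^ 2 + 1 = 0 := by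
    linear_combination (w ^ 2 - w + 1) * hw
  have hredχ : ∀ x : ZMod p, eisEval w hw (χ x) = x ^ (2 * n) := by
    intro x
    rcases eq_or_ne x 0 with rfl | hx
    · rw [MulChar.map_zero, map_zero, zero_pow (by omega)]
    · obtain ⟨i, rfl⟩ := hcases x hx
      rw [map_pow, map_pow, hχg, eisEval_apply]
      simp only [eisOmega, w]
      push_cast
      ring
  have hredχ' : ∀ x : ZMod p, eisEval (w ^ 2) hw' (χ x) = x ^ (4 * n) := by
    intro x
    rcases eq_or_ne x 0 with rfl | hx
    · rw [MulChar.map_zero, map_zero, zero_pow (by omega)]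
    · obtain ⟨i, rfl⟩ := hcases x hx
      rw [map_pow, map_pow, hχg, eisEval_apply]
      simp only [eisOmega, w]
      push_cast
      ring
  have hodd : ringChar (ZMod p) ≠ 2 := by rw [ZMod.ringChar_zmod_n]; omega
  let q : MulChar (ZMod p) ℤ := quadraticChar (ZMod p)
  have hq : ∀ x : ZMod p, ((q x : ℤ) : ZMod p) = x ^ (3 * n) := by
    intro x
    have := quadraticChar_eq_pow_of_char_ne_two' hodd x
    rwa [ZMod.card, show p / 2 = 3 * n by omega] at this
  let J : EisInt := jacobiSum χ (q.ringHomComp (Int.castRingHom EisInt))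
  have hJ : J = ∑ x : ZMod p, χ x * ((q (1 - x) : ℤ) : EisInt) := rfl
  -- reductions of `J` modulo the primes above `p`, as coefficients of a polynomial
  have hred : ∀ (f : EisInt →+* ZMod p) (j : ℕ), (∀ x, f (χ x) = x ^ j) → j < 6 * n →
      f J = -((X ^ j * (C 1 - X) ^ (3 * n) : (ZMod p)[X]).coeff (6 * n)) := by
    intro f j hf hj
    rw [hJ, map_sum, show 6 * n = p - 1 by omega, ← sum_eval_zmod]
    · refine Finset.sum_congr rfl fun x _ => ?_
      simp [hf, hq]
    · refine lt_of_le_of_lt (b := j * 1 + (3 * n) * 1) ?_ (by omega)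
      refine natDegree_mul_le_of_le (natDegree_pow_le_of_le _ natDegree_X_le)
        (natDegree_pow_le_of_le _ ?_)
      compute_degree
  have h1X : (C 1 - X : (ZMod p)[X]) ^ (3 * n) = C ((-1) ^ (3 * n)) * (X + C (-1)) ^ (3 * n) := by
    rw [C_pow, ← mul_pow]
    congr 1
    simp only [map_neg, C_1]
    ring
  have e1 : (J.re + J.im * w : ZMod p) = 0 := by
    rw [← eisEval_apply w hw, hred _ _ hredχ (by omega), show 6 * n = 4 * n + 2 * n by ring,
      coeff_X_pow_mul, neg_eq_zero]
    refine coeff_eq_zero_of_natDegree_lt (lt_of_le_of_lt (b := 3 * n * 1) ?_ (by omega))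
    refine natDegree_pow_le_of_le _ ?_
    compute_degree
  have e2 : ((J.re + J.im * w ^ 2 : ZMod p)) ^ 2 = ((3 * n).choose n : ZMod p) ^ 2 := by
    rw [← eisEval_apply (w ^ 2) hw', hred _ _ hredχ' (by omega),
      show 6 * n = 2 * n + 4 * n by ring,
      coeff_X_pow_mul, h1X, coeff_C_mul, coeff_X_add_C_pow, show 3 * n - 2 * n = n by omega,
      Nat.choose_symm_of_eq_add (show 3 * n = 2 * n + n by ring), ← mul_assoc, ← pow_add, neg_sq,
      mul_pow, ← pow_mul, mul_comm _ 2, pow_mul, neg_one_sq, one_pow, one_mul]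
  -- `∑ χ` is fixed by multiplication by `ω = χ g`
  have hS : (∑ x, χ x).im = 0 := by
    have h1 : (eisOmega : EisInt) * ∑ x, χ x = ∑ x, χ x := by
      rw [Finset.mul_sum]
      refine Eq.trans ?_ (Equiv.sum_comp (Units.mulLeft g) fun x => χ x)
      refine Finset.sum_congr rfl fun x _ => ?_
      simp [hχg]
    have hre := congrArg QuadraticAlgebra.re h1
    have him := congrArg QuadraticAlgebra.im h1
    simp only [eisOmega, QuadraticAlgebra.re_mul, QuadraticAlgebra.im_mul] at hre him
    omega
  have him_sum : ∀ f : ZMod p → EisInt, (∑ x, f x).im = ∑ x, (f x).im := fun f =>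
    map_sum (QuadraticAlgebra.imₗ (-1 : ℤ) (-1)) f _
  -- `q` takes odd values off `0`, so modulo `2` the sum `J` is `∑ χ - χ 1`, which has `ω`-coordinate `0`
  have heven : (2 : ℤ) ∣ J.im := by
    have : J.im = ∑ x : ZMod p, ((χ x).im * q (1 - x) - (χ x).im) := by
      rw [Finset.sum_sub_distrib, ← him_sum (fun x => χ x), hS, sub_zero, hJ, him_sum]
      simp
    rw [this]
    refine Finset.dvd_sum fun x _ => ?_
    rcases eq_or_ne x 1 with rfl | hx
    · simp
    · rcases quadraticChar_dichotomy (sub_ne_zero.mpr hx.symm) with h | h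
      · simp [q, h]
      · simp only [q, h]; exact ⟨-(χ x).im, by ring⟩
  -- over `ℂ`, `J(χ, q) J(χ⁻¹, q⁻¹) = p`, and `χ⁻¹` is `χ` followed by `ω ↦ ω²`
  have hnorm : J.re ^ 2 - J.re * J.im + J.im ^ 2 = p := by
    have hC : ∃ v : ℂ, v ^ 2 + v + 1 = 0 := by
      obtain ⟨v, hv⟩ := IsAlgClosed.exists_root (X ^ 2 + X + 1 : ℂ[X]) (by
        have : (X ^ 2 + X + 1 : ℂ[X]).degree = 2 := by compute_degree!
        rw [this]; norm_num)
      exact ⟨v, by simpa using hv⟩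
    obtain ⟨v, hv⟩ := hC
    have hv' : (v ^ 2) ^ 2 + v ^ 2 + 1 = 0 := by linear_combination (v ^ 2 - v + 1) * hv
    let χ₁ := χ.ringHomComp (eisEval v hv)
    let q₁ := q.ringHomComp (Int.castRingHom ℂ)
    have hv1 : v ≠ 1 := by rintro rfl; norm_num at hv
    have hχ₁g : χ₁ g = v := by
      simp [χ₁, MulChar.ringHomComp_apply, hχg, eisEval_apply, eisOmega]
    have hχ₁ : χ₁ ≠ 1 := by
      intro h
      apply hv1
      rw [← hχ₁g, h, MulChar.one_apply_coe]
    have hq₁sq : q₁ ^ 2 = 1 :=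
      ((quadraticChar_isQuadratic (ZMod p)).comp (Int.castRingHom ℂ)).sq_eq_one
    have hq₁ : q₁ ≠ 1 :=
      (MulChar.ringHomComp_ne_one_iff (Int.castRingHom ℂ).injective_int).mpr
        (quadraticChar_ne_one hodd)
    have hinv : χ₁⁻¹ = χ.ringHomComp (eisEval (v ^ 2) hv') := by
      refine inv_eq_of_mul_eq_one_right ((MulChar.eq_iff hg _ _).mpr ?_)
      rw [MulChar.mul_apply, hχ₁g, MulChar.one_apply_coe, MulChar.ringHomComp_apply, hχg,
        eisEval_apply]
      simp only [eisOmega]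
      push_cast
      linear_combination (v - 1) * hv
    have hprod : χ₁ * q₁ ≠ 1 := by
      intro h
      have h1 : χ₁ ^ 2 = 1 := by
        rw [← one_pow (M := MulChar (ZMod p) ℂ) 2, ← h, mul_pow, hq₁sq, mul_one]
      have h2 : v ^ 2 = 1 := by
        rw [← hχ₁g, ← MulChar.pow_apply_coe, h1, MulChar.one_apply_coe]
      have h3 : (3 : ℂ) = 0 := by linear_combination (2 - v) * hv + (v - 1) * h2
      norm_num at h3
    have hJJ := jacobiSum_mul_jacobiSum_inv (F := ZMod p) (F' := ℂ) (by
      rw [ZMod.ringChar_zmod_n, ringChar.eq_zero]; omega) hχ₁ hq₁ hprod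
    have hqinv : q₁⁻¹ = q₁ := by
      rw [inv_eq_iff_mul_eq_one, ← pow_two, hq₁sq]
    have hqq : ∀ (u : ℂ) (hu : u ^ 2 + u + 1 = 0),
        q₁ = (q.ringHomComp (Int.castRingHom EisInt)).ringHomComp (eisEval u hu) := by
      intro u hu
      ext x
      simp [q₁, MulChar.ringHomComp_apply]
    rw [hinv, hqinv] at hJJ
    nth_rw 1 [hqq v hv] at hJJ
    rw [hqq _ hv', jacobiSum_ringHomComp, jacobiSum_ringHomComp, eisEval_apply, eisEval_apply,
      ZMod.card] at hJJ
    have : ((J.re ^ 2 - J.re * J.im + J.im ^ 2 : ℤ) : ℂ) = (p : ℤ) := by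
      push_cast
      rw [← hJJ]
      change _ = ((J.re : ℂ) + J.im * v) * (J.re + J.im * v ^ 2)
      linear_combination (-J.re * J.im - J.im ^ 2 * (v - 1)) * hv
    exact_mod_cast this
  obtain ⟨d, hd⟩ := heven
  refine ⟨J.re - d, d, ?_, ?_⟩
  · rw [← hnorm, hd]; ring
  · rw [← e2]
    have : ((2 * (J.re - d) : ℤ) : ZMod p) = J.re + J.im * w ^ 2 := by
      rw [hd] at e1 ⊢
      push_cast at e1 ⊢
      linear_combination e1 - 2 * (d : ZMod p) * hw
    rw [this]

/-! ### Representations by the form -/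

/-- Put `x = (a + b√-3)²` and `y = (a - b√-3)²`. Since `x y = p²`, the recurrence
`S_{r+2} = (x + y) S_{r+1} - x y S_r` for `S_r = x ^ r + y ^ r` gives `S_r ≡ (x + y) ^ r`, and
`x + y = 2 (a² - 3b²) ≡ 4a²`. -/
theorem trace_pow {p : ℕ} {a b : ℤ} (hab : (p : ℤ) = a ^ 2 + 3 * b ^ 2) (r : ℕ) :
    ∀ g : ℤ, (g : ℂ) = ((a : ℂ) + b * (Complex.I * Real.sqrt 3)) ^ (2 * (r + 1)) +
      ((a : ℂ) - b * (Complex.I * Real.sqrt 3)) ^ (2 * (r + 1)) →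
    (g : ZMod p) = ((2 * a : ℤ) : ZMod p) ^ (2 * (r + 1)) := by
  have hs : (Complex.I * (Real.sqrt 3 : ℂ)) ^ 2 = -3 := by
    rw [mul_pow, Complex.I_sq, ← Complex.ofReal_pow, Real.sq_sqrt (by norm_num)]; norm_num
  generalize (Complex.I * (Real.sqrt 3 : ℂ)) = s at hs
  have habC : (p : ℂ) = a ^ 2 + 3 * b ^ 2 := by exact_mod_cast congrArg (Int.cast : ℤ → ℂ) hab
  have habF : (a : ZMod p) ^ 2 + 3 * b ^ 2 = 0 := by
    have := congrArg (Int.cast : ℤ → ZMod p) hab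
    push_cast at this
    rw [← this, ZMod.natCast_self]
  have key : ∀ r : ℕ, ∃ g h : ℤ,
      (g : ℂ) = (a + b * s) ^ (2 * (r + 1)) + (a - b * s) ^ (2 * (r + 1)) ∧
      (h : ℂ) = (a + b * s) ^ (2 * (r + 2)) + (a - b * s) ^ (2 * (r + 2)) ∧
      (g : ZMod p) = (2 * a) ^ (2 * (r + 1)) ∧ (h : ZMod p) = (2 * a) ^ (2 * (r + 2)) := by
    intro r
    induction r with
    | zero =>
      refine ⟨2 * (a ^ 2 - 3 * b ^ 2), (2 * (a ^ 2 - 3 * b ^ 2)) ^ 2 - 2 * p ^ 2, ?_, ?_, ?_, ?_⟩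
      · push_cast
        linear_combination (-2 * (b : ℂ) ^ 2) * hs
      · push_cast
        rw [habC]
        linear_combination (-12 * (a : ℂ) ^ 2 * b ^ 2 - 2 * b ^ 4 * (s ^ 2 - 3)) * hs
      · push_cast
        linear_combination (-2) * habF
      · push_cast
        rw [ZMod.natCast_self]
        linear_combination (-12 * (a : ZMod p) ^ 2 + 12 * b ^ 2) * habF
    | succ r ih =>
      obtain ⟨g, h, hg, hh, hgp, hhp⟩ := ih
      refine ⟨h, 2 * (a ^ 2 - 3 * b ^ 2) * h - p ^ 2 * g, hh, ?_, hhp, ?_⟩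
      · have e1 : (2 * (a ^ 2 - 3 * b ^ 2) : ℂ) = (a + b * s) ^ 2 + (a - b * s) ^ 2 := by
          linear_combination (-2 * (b : ℂ) ^ 2) * hs
        have e2 : (p : ℂ) = (a + b * s) * (a - b * s) := by
          rw [habC]; linear_combination ((b : ℂ) ^ 2) * hs
        push_cast
        rw [e1, e2, hg, hh]
        ring
      · push_cast
        rw [ZMod.natCast_self, hhp]
        linear_combination (-2 * (2 * (a : ZMod p)) ^ (2 * (r + 2))) * habF
  intro g hg
  obtain ⟨g', -, hg', -, h, -⟩ := key r
  have : g = g' := by exact_mod_cast hg.trans hg'.symm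
  subst this
  push_cast
  exact h

/-- In `p = a² + 3b²` the value of `a²` is determined by `p`: `p` divides `(ad - cb)(ad + cb)`, and
by Brahmagupta's identities `p² = (ac ± 3bd)² + 3 (ad ∓ cb)²` the factor divisible by `p` is zero.
-/
theorem sq_unique {p : ℕ} (hp : p.Prime) {a b c d : ℤ} (h1 : a ^ 2 + 3 * b ^ 2 = p)
    (h2 : c ^ 2 + 3 * d ^ 2 = p) : a ^ 2 = c ^ 2 := by
  have hp' : Prime (p : ℤ) := Nat.prime_iff_prime_int.mp hp
  have hpos : (0 : ℤ) < p := by exact_mod_cast hp.pos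
  have hdvd : (p : ℤ) ∣ (a * d - c * b) * (a * d + c * b) :=
    ⟨d ^ 2 - b ^ 2, by linear_combination (-b ^ 2) * h2 + d ^ 2 * h1⟩
  have key : ∀ e f : ℤ, e ^ 2 + 3 * f ^ 2 = (p : ℤ) ^ 2 → (p : ℤ) ∣ f → f = 0 := by
    rintro e f h ⟨t, rfl⟩
    by_contra hne
    have ht : 1 ≤ t ^ 2 := by
      have : t ≠ 0 := by rintro rfl; simp at hne
      have := pow_pos (abs_pos.mpr this) 2
      rw [sq_abs] at this
      omega
    nlinarith [sq_nonneg e, mul_pos hpos hpos]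
  have hz : (a * d - c * b) * (a * d + c * b) = 0 := by
    rcases hp'.dvd_or_dvd hdvd with h | h
    · rw [key (a * c + 3 * b * d) _
        (by rw [pow_two (p : ℤ)]; nth_rw 1 [← h1]; rw [← h2]; ring) h, zero_mul]
    · rw [key (a * c - 3 * b * d) _
        (by rw [pow_two (p : ℤ)]; nth_rw 1 [← h1]; rw [← h2]; ring) h, mul_zero]
  apply mul_left_cancel₀ hpos.ne'
  linear_combination (-a^2) * h2 + c ^ 2 * h1 + 3 * hz

/-! ### The middle value -/

theorem apC_eq_legG_eval (m : ℕ) (p : ℕ) : (apC m : ZMod p) = (legG m (ZMod p)).eval 1 := by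
  simp [apC, legG, eval_finsetSum, Nat.centralBinom]

theorem apC_half {p n : ℕ} [Fact p.Prime] (hn : p = 6 * n + 1) {z : ZMod p}
    (hz : z ^ 2 - z + 1 = 0) : (apC (3 * n) : ZMod p) = ((3 * n).choose n : ZMod p) ^ 2 := by
  rw [← legH_sq hn hz, ← eval_pow, clausen (by omega), eval_comp, apC_eq_legG_eval]
  congr 1
  simp only [eval_sub, eval_X, eval_pow]
  linear_combination hz

theorem exists_sixth_root {p : ℕ} [Fact p.Prime] (hp3 : 3 < p) {a b : ℤ} (hb : 0 < b)
    (hab : (p : ℤ) = a ^ 2 + 3 * b ^ 2) : ∃ z : ZMod p, z ^ 2 - z + 1 = 0 := by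
  have hb0 : (b : ZMod p) ≠ 0 := by
    rw [Ne, ZMod.intCast_zmod_eq_zero_iff_dvd]
    intro h
    have := Int.le_of_dvd hb h
    nlinarith [sq_nonneg a]
  have h2 : (2 : ZMod p) ≠ 0 := by
    have : ((2 : ℕ) : ZMod p) ≠ 0 := by
      rw [Ne, ZMod.natCast_eq_zero_iff]
      exact Nat.not_dvd_of_pos_of_lt (by omega) (by omega)
    exact_mod_cast this
  have habF : (a : ZMod p) ^ 2 + 3 * b ^ 2 = 0 := by
    have := congrArg (Int.cast : ℤ → ZMod p) hab
    push_cast at this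
    rw [← this, ZMod.natCast_self]
  -- `a / b` is a square root of `-3`
  refine ⟨(b + a) / (2 * b), ?_⟩
  field_simp
  linear_combination habF

end ApC

/-- Theorem 1.4 (case `p ≡ 1 (mod 6)`): `C((p^r−1)/2) ≡ γ_{2r+1}(p) (mod p)`, where
`γ_{2r+1}(p) = (a + b√−3)^(2r) + (a − b√−3)^(2r)`. -/
theorem apC_congruence (p : ℕ) (hp : p.Prime) (hp3 : 3 < p) (hp6 : p % 6 = 1)
    (a b : ℤ) (ha : a % 3 = 1) (hb : 0 < b) (hab : (p : ℤ) = a ^ 2 + 3 * b ^ 2)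
    (r : ℕ) (hr : 1 ≤ r) (g : ℤ)
    (hg : (g : ℂ) = ((a : ℂ) + b * (Complex.I * Real.sqrt 3)) ^ (2 * r) +
      ((a : ℂ) - b * (Complex.I * Real.sqrt 3)) ^ (2 * r)) :
    apC ((p ^ r - 1) / 2) ≡ g [ZMOD (p : ℤ)] := by
  have : Fact p.Prime := ⟨hp⟩
  obtain ⟨n, hn⟩ : ∃ n, p = 6 * n + 1 := ⟨p / 6, by omega⟩
  obtain ⟨z, hz⟩ := ApC.exists_sixth_root hp3 hb hab
  obtain ⟨c, d, hcd, hc⟩ := ApC.jacobi_int hn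
  have hac : a ^ 2 = c ^ 2 := ApC.sq_unique hp hab.symm hcd
  obtain ⟨r, rfl⟩ := Nat.exists_eq_add_of_le' hr
  rw [← ZMod.intCast_eq_intCast_iff, ApC.apC_pow (m := 3 * n) (by omega), ApC.apC_half hn hz, ← hc,
    ApC.trace_pow hab r g hg, pow_mul]
  congr 1
  have := congrArg (Int.cast : ℤ → ZMod p) hac
  push_cast at this ⊢
  linear_combination (-4) * this
end

section
/- Let p > 3 be a prime with p ≡ 5 (mod 6). Then for every integer r ≥ 1: C((p^r − 1)/2) ≡ 0 (mod p). -/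
open Polynomial

/-! ### Differential equations -/

/-- Two-term recurrence in `k` for the absolute values of the coefficients of `shiftedLegendre n`. -/
theorem leg_choose_rec (n k : ℕ) :
    ((k : ℤ) + 1) ^ 2 * (n.choose (k + 1) * (n + (k + 1)).choose n) =
      (n * (n + 1) - k * (k + 1)) * (n.choose k * (n + k).choose n) := by
  have h1 : ((n + (k + 1)).choose n : ℤ) * (k + 1) = (n + k + 1) * (n + k).choose n := by
    have h := Nat.choose_mul_succ_eq (n + k) n
    rw [show n + k + 1 - n = k + 1 by omega] at h
    rw [← add_assoc]
    have h' : (((n + k).choose n * (n + k + 1) : ℕ) : ℤ) =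
      ((n + k + 1).choose n * (k + 1) : ℕ) := by rw [h]
    push_cast at h'
    linarith
  have h2 : (n.choose (k + 1) : ℤ) * (k + 1) = (n - k) * n.choose k := by
    rcases le_or_gt k n with hk | hk
    · have h := Nat.choose_succ_right_eq n k
      zify [hk] at h
      linarith
    · simp [Nat.choose_eq_zero_of_lt hk, Nat.choose_eq_zero_of_lt (hk.trans (Nat.lt_succ_self k))]
  linear_combination (n.choose (k + 1) : ℤ) * (k + 1) * h1 +
    (n + k + 1) * ((n + k).choose n : ℤ) * h2

/-- The Euler-type operators `X ^ j * (d/dX) ^ j` act diagonally on coefficients. The differential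
equations below are multiplied by `X` and rewritten in these operators, which turns them into
recurrences for the coefficients. -/
theorem coeff_euler_one (f : ℤ[X]) (m : ℕ) :
    (X * derivative f).coeff m = m * f.coeff m := by
  cases m with
  | zero => simp
  | succ m => rw [coeff_X_mul, coeff_derivative]; push_cast; ring

theorem coeff_euler_two (f : ℤ[X]) (m : ℕ) :
    (X ^ 2 * derivative (derivative f)).coeff m = m * (m - 1) * f.coeff m := by
  rcases m with _ | _ | m
  · simp [pow_two, mul_assoc]
  · simp [pow_two, mul_assoc, coeff_X_mul]
  · rw [pow_two, mul_assoc, coeff_X_mul, coeff_X_mul, coeff_derivative, coeff_derivative]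
    push_cast; ring

theorem coeff_euler_three (f : ℤ[X]) (m : ℕ) :
    (X ^ 3 * derivative (derivative (derivative f))).coeff m =
      m * (m - 1) * (m - 2) * f.coeff m := by
  have h : (X : ℤ[X]) ^ 3 * derivative (derivative (derivative f)) =
    X * (X * (X * derivative (derivative (derivative f)))) := by ring
  rw [h]
  rcases m with _ | _ | _ | m
  · simp
  · simp [coeff_X_mul]
  · simp [coeff_X_mul]
  · rw [coeff_X_mul, coeff_X_mul, coeff_X_mul, coeff_derivative, coeff_derivative,
      coeff_derivative]
    push_cast; ring

/-- The Legendre differential equation, shifted to the interval `[0, 1]`. -/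
theorem shiftedLegendre_ode (n : ℕ) :
    (X ^ 2 - X) * derivative (derivative (shiftedLegendre n)) +
      (2 * X - 1) * derivative (shiftedLegendre n) =
      C ((n : ℤ) * (n + 1)) * shiftedLegendre n := by
  set S := shiftedLegendre n with hS
  refine mul_left_cancel₀ (X_ne_zero (R := ℤ)) ?_
  have e : X * ((X ^ 2 - X) * derivative (derivative S) + (2 * X - 1) * derivative S) =
      X * (X ^ 2 * derivative (derivative S)) - X ^ 2 * derivative (derivative S) +
      X * (C 2 * (X * derivative S)) - X * derivative S := by
    simp only [map_ofNat]; ring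
  rw [e]
  ext m
  cases m with
  | zero => simp
  | succ m =>
    simp only [coeff_add, coeff_sub, coeff_X_mul, coeff_C_mul, coeff_euler_one, coeff_euler_two,
      coeff_derivative]
    rw [hS, coeff_shiftedLegendre, coeff_shiftedLegendre]
    have := leg_choose_rec n m
    push_cast at this ⊢
    rw [pow_succ]
    linear_combination (-1) ^ m * this

/-- The polynomial `G(y) = ∑ k, binom(2k, k) * binom(n, k) * binom(n + k, n) * y ^ k`; the square of
the shifted Legendre polynomial is `G(x ^ 2 - x)`. -/
noncomputable def clausenPoly (n : ℕ) : ℤ[X] :=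
  ∑ k ∈ Finset.range (n + 1),
    C ((k.centralBinom : ℤ) * (n.choose k * (n + k).choose n)) * X ^ k

theorem coeff_clausenPoly (n k : ℕ) :
    (clausenPoly n).coeff k = k.centralBinom * (n.choose k * (n + k).choose n) := by
  rw [clausenPoly, finsetSum_coeff]
  simp_rw [coeff_C_mul_X_pow]
  simp +contextual [Nat.choose_eq_zero_of_lt]

/-- The hypergeometric equation of `clausenPoly n`, equivalent to the two-term recurrence
`(k + 1) ^ 3 * d (k + 1) = 2 * (2 * k + 1) * (n * (n + 1) - k * (k + 1)) * d k` of its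
coefficients. -/
theorem clausenPoly_ode (n : ℕ) :
    X ^ 2 * (4 * X + 1) * derivative (derivative (derivative (clausenPoly n))) +
      (18 * X ^ 2 + 3 * X) * derivative (derivative (clausenPoly n)) +
      (12 * X + 1 - 4 * C ((n : ℤ) * (n + 1)) * X) * derivative (clausenPoly n) =
      2 * C ((n : ℤ) * (n + 1)) * clausenPoly n := by
  set G := clausenPoly n with hG
  set N : ℤ := (n : ℤ) * (n + 1) with hN
  refine mul_left_cancel₀ (X_ne_zero (R := ℤ)) ?_
  have e : X * (X ^ 2 * (4 * X + 1) * derivative (derivative (derivative G)) +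
      (18 * X ^ 2 + 3 * X) * derivative (derivative G) +
      (12 * X + 1 - 4 * C N * X) * derivative G) =
      X * (C 4 * (X ^ 3 * derivative (derivative (derivative G)))) +
      X ^ 3 * derivative (derivative (derivative G)) +
      X * (C 18 * (X ^ 2 * derivative (derivative G))) +
      C 3 * (X ^ 2 * derivative (derivative G)) +
      X * (C (12 - 4 * N) * (X * derivative G)) + X * derivative G := by
    simp only [map_ofNat, map_sub, map_mul]; ring
  rw [e, show X * (2 * C N * G) = X * (C (2 * N) * G) by simp only [map_ofNat, map_mul]]
  ext m
  cases m with
  | zero =>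
    simp only [coeff_add, coeff_C_mul, coeff_X_mul_zero, coeff_euler_two,
      coeff_euler_three]
    simp
  | succ m =>
    simp only [coeff_add, coeff_X_mul, coeff_C_mul, coeff_euler_one, coeff_euler_two,
      coeff_euler_three, coeff_derivative]
    rw [hG, coeff_clausenPoly, coeff_clausenPoly]
    have h1 := leg_choose_rec n m
    have h2 : ((m : ℤ) + 1) * (m + 1).centralBinom = 2 * (2 * m + 1) * m.centralBinom := by
      exact_mod_cast Nat.succ_mul_centralBinom_succ m
    push_cast at h1 h2 ⊢
    rw [← hN] at h1
    linear_combination ((m : ℤ) + 1) * (m + 1).centralBinom * h1 +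
      (N - m * (m + 1)) * (n.choose m * (n + m).choose n : ℤ) * h2

/-! ### The square of a shifted Legendre polynomial -/

/-- Uniqueness for the symmetric square of the Legendre equation: its indicial polynomial at `0` is
`m ^ 3`, so a polynomial solution without constant term vanishes. -/
theorem eq_zero_of_symSquare_ode (N : ℤ) (g : ℤ[X]) (h0 : g.coeff 0 = 0)
    (h : (X ^ 2 - X) ^ 2 * derivative (derivative (derivative g)) +
      3 * (X ^ 2 - X) * (2 * X - 1) * derivative (derivative g) +
      (2 * (X ^ 2 - X) + (2 * X - 1) ^ 2 - 4 * C N * (X ^ 2 - X)) * derivative g -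
      2 * C N * (2 * X - 1) * g = 0) : g = 0 := by
  have e : X ^ 3 * derivative (derivative (derivative g))
      - X * (C 2 * (X ^ 3 * derivative (derivative (derivative g))))
      + X * (X * (X ^ 3 * derivative (derivative (derivative g))))
      + C 3 * (X ^ 2 * derivative (derivative g))
      - X * (C 9 * (X ^ 2 * derivative (derivative g)))
      + X * (X * (C 6 * (X ^ 2 * derivative (derivative g))))
      + X * derivative g - X * (C (6 - 4 * N) * (X * derivative g))
      + X * (X * (C (6 - 4 * N) * (X * derivative g)))
      + X * (C (2 * N) * g) - X * (X * (C (4 * N) * g)) = 0 := by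
    simp only [map_ofNat, map_sub, map_mul]
    linear_combination X * h
  have key : ∀ m, g.coeff m = 0 ∧ g.coeff (m + 1) = 0 := by
    intro m
    induction m with
    | zero =>
      refine ⟨h0, ?_⟩
      have := congrArg (fun q => coeff q 1) e
      simp only [coeff_add, coeff_sub, coeff_C_mul, coeff_derivative, coeff_euler_two,
        coeff_euler_three, coeff_zero,
        show ∀ q : ℤ[X], (X * q).coeff 1 = q.coeff 0 from fun q => coeff_X_mul q 0,
        coeff_X_mul_zero, h0] at this
      simpa using this
    | succ m ih =>
      refine ⟨ih.2, ?_⟩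
      have := congrArg (fun q => coeff q (m + 1 + 1)) e
      simp only [coeff_add, coeff_sub, coeff_X_mul, coeff_C_mul, coeff_euler_one, coeff_euler_two,
        coeff_euler_three, coeff_derivative, coeff_zero, ih.1, ih.2] at this
      have h3 : ((m : ℤ) + 2) ^ 3 * g.coeff (m + 1 + 1) = 0 := by
        push_cast at this
        linear_combination this
      exact (mul_eq_zero.mp h3).resolve_left (by positivity)
  ext m
  simpa using (key m).1

/-- Clausen-type identity for the square of a shifted Legendre polynomial. -/
theorem shiftedLegendre_sq (n : ℕ) :
    shiftedLegendre n ^ 2 = (clausenPoly n).comp (X ^ 2 - X) := by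
  set N : ℤ := (n : ℤ) * (n + 1) with hN
  rw [← sub_eq_zero]
  apply eq_zero_of_symSquare_ode N
  · have h1 : (shiftedLegendre n).coeff 0 = 1 := by simp [coeff_shiftedLegendre]
    have h2 : (clausenPoly n).coeff 0 = 1 := by simp [coeff_clausenPoly]
    rw [coeff_zero_eq_eval_zero] at h1 h2 ⊢
    simp [eval_comp, h1, h2]
  · have hS := shiftedLegendre_ode n
    have hS' := congrArg derivative hS
    have hG := congrArg (fun q => q.comp (X ^ 2 - X)) (clausenPoly_ode n)
    rw [← hN] at hS hS' hG
    simp only [add_comp, mul_comp, sub_comp, pow_comp, X_comp, C_comp, one_comp, ofNat_comp] at hG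
    set S := shiftedLegendre n
    set G := clausenPoly n
    simp only [derivative_add, derivative_mul, derivative_sub, derivative_X,
      derivative_C, derivative_one, derivative_ofNat, derivative_comp, derivative_pow,
      derivative_zero, Nat.cast_ofNat, map_ofNat, Nat.reduceSub, pow_one] at hS' ⊢
    generalize derivative (derivative (derivative S)) = S3 at *
    generalize derivative (derivative S) = S2 at *
    generalize derivative S = S1 at *
    generalize (derivative (derivative (derivative G))).comp (X ^ 2 - X) = G3 at *
    generalize (derivative (derivative G)).comp (X ^ 2 - X) = G2 at *
    generalize (derivative G).comp (X ^ 2 - X) = G1 at *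
    generalize G.comp (X ^ 2 - X) = G0 at *
    -- The factor `2 * X - 1`, the derivative of `X ^ 2 - X`, comes from the chain rule applied to
    -- `G.comp (X ^ 2 - X)`.
    linear_combination 2 * S * (X ^ 2 - X) * hS' +
      (6 * (X ^ 2 - X) * S1 + 2 * (2 * X - 1) * S) * hS - (2 * X - 1) * hG

/-! ### Lucas congruence -/

/-- Lucas congruence for `apC`. Only last digits `s < p / 2` are treated: then the indices
`k = p * a + b` with `b ≤ s` satisfy `2 * b < p`, so doubling `k` produces no carry. -/
theorem apC_lucas (p : ℕ) (hp : p.Prime) (m s : ℕ) (hs : 2 * s < p) :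
    apC (p * m + s) ≡ apC m * apC s [ZMOD p] := by
  have := Fact.mk hp
  have hp0 := hp.pos
  have lucas : ∀ a b c d : ℕ, b < p → d < p →
      (((p * a + b).choose (p * c + d) : ℕ) : ZMod p) = a.choose c * b.choose d := by
    intro a b c d hb hd
    have h := Choose.choose_modEq_choose_mod_mul_choose_div_nat (p := p)
      (n := p * a + b) (k := p * c + d)
    rw [Nat.mul_add_mod, Nat.mul_add_mod, Nat.mod_eq_of_lt hb, Nat.mod_eq_of_lt hd,
      Nat.mul_add_div hp0, Nat.mul_add_div hp0, Nat.div_eq_of_lt hb, Nat.div_eq_of_lt hd,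
      add_zero, add_zero] at h
    have h' := (ZMod.natCast_eq_natCast_iff _ _ _).mpr h
    push_cast at h'
    rw [h', mul_comm]
  have split : ∀ (f : ℕ → ZMod p) (M : ℕ), ∑ k ∈ Finset.range (p * M), f k =
      ∑ a ∈ Finset.range M, ∑ b ∈ Finset.range p, f (p * a + b) := by
    intro f M
    induction M with
    | zero => simp
    | succ M ih => rw [Finset.sum_range_succ, ← ih, mul_add, mul_one, Finset.sum_range_add]
  have extend : ∀ n M : ℕ, n + 1 ≤ M → ((apC n : ℤ) : ZMod p) =
      ∑ k ∈ Finset.range M, (n.choose k : ZMod p) ^ 2 * ((2 * k).choose k : ZMod p) := by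
    intro n M hM
    unfold apC
    push_cast
    refine Finset.sum_subset (Finset.range_mono hM) ?_
    intro k _ hk
    rw [Finset.mem_range, not_lt] at hk
    simp [Nat.choose_eq_zero_of_lt (show n < k by omega)]
  rw [← ZMod.intCast_eq_intCast_iff]
  push_cast
  rw [extend (p * m + s) (p * (m + 1)) (by rw [mul_add]; omega), split,
    extend m (m + 1) le_rfl, extend s p (by omega), Finset.sum_mul_sum]
  refine Finset.sum_congr rfl fun a _ => Finset.sum_congr rfl fun b hb => ?_
  rw [Finset.mem_range] at hb
  rw [lucas m s a b (by omega) hb]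
  rcases le_or_gt b s with hbs | hbs
  · rw [show 2 * (p * a + b) = p * (2 * a) + 2 * b by ring,
      lucas (2 * a) (2 * b) a b (by omega) hb]
    ring
  · simp [Nat.choose_eq_zero_of_lt hbs]

/-! ### Vanishing in characteristic `p` -/

/-- For `2 * n + 1 = p` this is `binom(n + k, k) = (-1) ^ k * binom(-n - 1, k)` with `-n - 1 = n` in
characteristic `p`. -/
theorem choose_add_half {p n : ℕ} (hn : 2 * n + 1 = p) {K : Type*} [Field K]
    [CharP K p] {k : ℕ} (hk : k ≤ n) :
    ((n + k).choose n : K) = (-1) ^ k * n.choose k := by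
  induction k with
  | zero => simp
  | succ k ih =>
    have hne : ((k + 1 : ℕ) : K) ≠ 0 := by
      rw [Ne, CharP.cast_eq_zero_iff K p]
      exact Nat.not_dvd_of_pos_of_lt (Nat.succ_pos k) (by omega)
    have hp0 : (2 * n + 1 : K) = 0 := by
      have := CharP.cast_eq_zero K p
      rw [← hn] at this
      exact_mod_cast this
    have h1 : ((n + (k + 1)).choose n : K) * (k + 1) = (n + k + 1) * (n + k).choose n := by
      have h := Nat.choose_mul_succ_eq (n + k) n
      rw [show n + k + 1 - n = k + 1 by omega] at h
      have h' := congrArg (Nat.cast (R := K)) h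
      push_cast at h'
      rw [← add_assoc, ← h', mul_comm]
    have h2 : (n.choose (k + 1) : K) * (k + 1) = (n - k) * n.choose k := by
      have h' := congrArg (Nat.cast (R := K)) (Nat.choose_succ_right_eq n k)
      push_cast [Nat.cast_sub (show k ≤ n by omega)] at h'
      rw [h', mul_comm]
    apply mul_right_cancel₀ hne
    push_cast
    rw [h1, ih (by omega), pow_succ]
    linear_combination (-1) ^ k * h2 + (-1) ^ k * (n.choose k : K) * hp0

theorem shiftedLegendre_half {p n : ℕ} (hn : 2 * n + 1 = p) {K : Type*} [Field K]
    [CharP K p] (x : K) :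
    aeval x (shiftedLegendre n) = ∑ k ∈ Finset.range (n + 1), (n.choose k : K) ^ 2 * x ^ k := by
  rw [shiftedLegendre, map_sum]
  refine Finset.sum_congr rfl fun k hk => ?_
  simp only [map_mul, map_pow, aeval_X, map_neg, map_one, map_natCast]
  rw [choose_add_half hn (by simpa [Nat.lt_succ_iff] using hk)]
  have : ((-1 : K) ^ k) * (-1) ^ k = 1 := by rw [← mul_pow]; simp
  linear_combination (n.choose k : K) ^ 2 * x ^ k * this

/-- The two symmetries `x ↦ 1 - x` and `x ↦ 1 / x` agree at a root of `x ^ 2 - x + 1` but carry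
different multipliers when `n ≡ 2 (mod 3)`. -/
theorem shiftedLegendre_half_eq_zero {p n : ℕ} (hp : p.Prime) (hn : 2 * n + 1 = p)
    (hp6 : p % 6 = 5) {K : Type*} [Field K] [CharP K p] {x : K} (hx : x ^ 2 - x + 1 = 0) :
    aeval x (shiftedLegendre n) = 0 := by
  have hinv : x * (1 - x) = 1 := by linear_combination -hx
  have hpal : aeval x (shiftedLegendre n) = x ^ n * aeval (1 - x) (shiftedLegendre n) := by
    rw [shiftedLegendre_half hn, shiftedLegendre_half hn, Finset.mul_sum,
      ← Finset.sum_range_reflect]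
    refine Finset.sum_congr rfl fun k hk => ?_
    have hk' : k ≤ n := by simpa [Nat.lt_succ_iff] using hk
    rw [show n + 1 - 1 - k = n - k by omega, Nat.choose_symm hk']
    have : x ^ n = x ^ (n - k) * x ^ k := by rw [← pow_add, Nat.sub_add_cancel hk']
    rw [this]
    have h1 : x ^ k * (1 - x) ^ k = 1 := by rw [← mul_pow, hinv, one_pow]
    linear_combination -(n.choose k : K) ^ 2 * x ^ (n - k) * h1
  have hsymm := shiftedLegendre_eval_symm n x
  have hsign : ((-1 : K) ^ n) * (-1) ^ n = 1 := by rw [← mul_pow]; simp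
  have hfix : (1 - (-x) ^ n) * aeval x (shiftedLegendre n) = 0 := by
    rw [neg_pow]
    linear_combination hpal - (-1) ^ n * x ^ n * hsymm -
      x ^ n * aeval (1 - x) (shiftedLegendre n) * hsign
  refine (mul_eq_zero.mp hfix).resolve_left fun h => ?_
  obtain ⟨j, hj⟩ : ∃ j, n = 3 * j + 2 := ⟨n / 3, by omega⟩
  have hcube : (-x) ^ 3 = 1 := by linear_combination -(x + 1) * hx
  rw [hj, pow_add, pow_mul, hcube, one_pow, one_mul] at h
  -- A common root of `x ^ 2 = 1` and `x ^ 2 - x + 1` is `2`, where the latter takes the value `3`.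
  have h3 : ((3 : ℕ) : K) = 0 := by
    push_cast
    linear_combination (x + 1) * h + (x + 2) * hx
  rw [CharP.cast_eq_zero_iff K p] at h3
  have := Nat.le_of_dvd (by norm_num) h3
  interval_cases p <;> omega

theorem apC_half_cast_eq_zero {p n : ℕ} (hp : p.Prime) (hn : 2 * n + 1 = p) (hp6 : p % 6 = 5)
    (K : Type*) [Field K] [CharP K p] [IsAlgClosed K] : (apC n : K) = 0 := by
  have h2 : (2 : K) ≠ 0 := by
    have : ((2 : ℕ) : K) ≠ 0 := by
      rw [Ne, CharP.cast_eq_zero_iff K p]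
      intro h
      have := Nat.le_of_dvd (by norm_num) h
      omega
    exact_mod_cast this
  obtain ⟨x, hx⟩ : ∃ x : K, x ^ 2 - x + 1 = 0 := by
    obtain ⟨s, hs⟩ := IsAlgClosed.exists_pow_nat_eq (-3 : K) (n := 2) (by norm_num)
    refine ⟨(1 + s) / 2, ?_⟩
    field_simp
    linear_combination hs
  have hsq := congrArg (aeval x) (shiftedLegendre_sq n)
  rw [map_pow, shiftedLegendre_half_eq_zero hp hn hp6 hx, aeval_comp,
    show aeval x (X ^ 2 - X : ℤ[X]) = -1 by
      simp only [map_sub, map_pow, aeval_X]; linear_combination hx, clausenPoly, map_sum] at hsq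
  rw [apC]
  push_cast
  rw [← zero_pow (two_ne_zero : (2 : ℕ) ≠ 0), hsq]
  refine Finset.sum_congr rfl fun k hk => ?_
  simp only [map_mul, map_pow, aeval_X, map_natCast]
  rw [choose_add_half hn (by simpa [Nat.lt_succ_iff] using hk), Nat.centralBinom]
  have : ((-1 : K) ^ k) * (-1) ^ k = 1 := by rw [← mul_pow]; simp
  linear_combination -(n.choose k : K) ^ 2 * (2 * k).choose k * this

theorem apC_half (p n : ℕ) (hp : p.Prime) (hn : 2 * n + 1 = p) (hp6 : p % 6 = 5) :
    apC n ≡ 0 [ZMOD p] := by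
  have := Fact.mk hp
  have : CharP (AlgebraicClosure (ZMod p)) p :=
    charP_of_injective_algebraMap (algebraMap (ZMod p) _).injective p
  rw [Int.modEq_zero_iff_dvd, ← CharP.intCast_eq_zero_iff (AlgebraicClosure (ZMod p)) p]
  exact apC_half_cast_eq_zero hp hn hp6 _

/-- Theorem 1.4 (case `p ≡ 5 (mod 6)`): `C((p^r−1)/2) ≡ 0 (mod p)`. -/
theorem apC_congruence_inert (p : ℕ) (hp : p.Prime) (hp3 : 3 < p) (hp6 : p % 6 = 5)
    (r : ℕ) (hr : 1 ≤ r) :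
    apC ((p ^ r - 1) / 2) ≡ 0 [ZMOD (p : ℤ)] := by
  obtain ⟨n, hn⟩ : ∃ n, 2 * n + 1 = p := ⟨p / 2, by omega⟩
  obtain ⟨r, rfl⟩ : ∃ t, r = t + 1 := ⟨r - 1, by omega⟩
  obtain ⟨m, hm⟩ : Odd (p ^ r) := Odd.pow ⟨n, hn.symm⟩
  have hidx : (p ^ (r + 1) - 1) / 2 = p * m + n := by
    have : p ^ (r + 1) = 2 * (p * m + n) + 1 := by
      rw [pow_succ, hm]
      linear_combination -hn
    omega
  rw [hidx]
  refine (apC_lucas p hp m n (by omega)).trans ?_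
  simpa using (apC_half p n hp hn hp6).mul_left (apC m)
end

section
/- Let p > 3 be a prime. Then for every integer r ≥ 1: C((p^r − 1)/2) ≡ C((p − 1)/2)^r (mod p). -/
lemma choose_add_mul_cast {p : ℕ} [Fact p.Prime] {a i : ℕ} (ha : a < p) (hi : i < p) (b j : ℕ) :
    ((a + p * b).choose (i + p * j) : ZMod p) = (a.choose i : ZMod p) * (b.choose j : ZMod p) := by
  have hp : 0 < p := (Fact.out : p.Prime).pos
  have h := (ZMod.intCast_eq_intCast_iff _ _ p).2
    (Choose.choose_modEq_choose_mod_mul_choose_div (n := a + p * b) (k := i + p * j) (p := p))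
  simpa [Nat.add_mul_mod_self_left, Nat.mod_eq_of_lt ha, Nat.mod_eq_of_lt hi,
    Nat.add_mul_div_left _ _ hp, Nat.div_eq_of_lt ha, Nat.div_eq_of_lt hi] using h

/-- The terms with `k > n` vanish, so the sum defining `apC n` may be extended. -/
lemma apC_cast_eq_sum (p : ℕ) {n M : ℕ} (h : n < M) :
    (apC n : ZMod p) =
      ∑ k ∈ Finset.range M, (n.choose k : ZMod p) ^ 2 * ((2 * k).choose k : ZMod p) := by
  rw [apC]
  push_cast
  refine Finset.sum_subset (Finset.range_subset_range.2 h) fun k _ hk => ?_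
  rw [Nat.choose_eq_zero_of_lt (by simpa using hk)]
  simp

lemma sum_range_mul_digits {R : Type*} [AddCommMonoid R] (p m : ℕ) (f : ℕ → R) :
    ∑ k ∈ Finset.range (p * m), f k =
      ∑ j ∈ Finset.range m, ∑ i ∈ Finset.range p, f (i + p * j) := by
  induction m with
  | zero => simp
  | succ m ih =>
    rw [Nat.mul_succ, Finset.sum_range_add, ih, Finset.sum_range_succ]
    simp only [add_comm]

/-- The Lucas-type congruence for `apC`, when the last base-`p` digit is less than `p / 2`. -/
lemma apC_add_mul_cast {p : ℕ} [Fact p.Prime] {a : ℕ} (ha : 2 * a < p) (b : ℕ) :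
    (apC (a + p * b) : ZMod p) = apC a * apC b := by
  have hap : a < p := by omega
  rw [apC_cast_eq_sum p (show a + p * b < p * (b + 1) by rw [Nat.mul_succ]; omega),
    sum_range_mul_digits, apC_cast_eq_sum p hap, apC_cast_eq_sum p (Nat.lt_succ_self b),
    Finset.sum_mul_sum, Finset.sum_comm]
  refine Finset.sum_congr rfl fun i hi => Finset.sum_congr rfl fun j _ => ?_
  have hip := Finset.mem_range.1 hi
  rw [choose_add_mul_cast hap hip]
  rcases le_or_gt i a with hia | hia
  · rw [show 2 * (i + p * j) = 2 * i + p * (2 * j) by ring,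
      choose_add_mul_cast (by omega) hip]
    ring
  · simp [Nat.choose_eq_zero_of_lt hia]

/-- For primes `p > 3`: `C((p^r−1)/2) ≡ C((p−1)/2)^r (mod p)`. -/
theorem apC_pow_congruence (p : ℕ) (hp : p.Prime) (hp3 : 3 < p)
    (r : ℕ) (hr : 1 ≤ r) :
    apC ((p ^ r - 1) / 2) ≡ apC ((p - 1) / 2) ^ r [ZMOD (p : ℤ)] := by
  have := Fact.mk hp
  rw [← ZMod.intCast_eq_intCast_iff]
  push_cast
  induction r, hr using Nat.le_induction with
  | base => simp
  | succ r _ ih =>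
    have hodd : Odd p := hp.odd_of_ne_two (by omega)
    have hdigit : (p ^ (r + 1) - 1) / 2 = (p - 1) / 2 + p * ((p ^ r - 1) / 2) := by
      obtain ⟨s, hs⟩ := hodd.pow (n := r)
      obtain ⟨t, ht⟩ := hodd
      have h1 : p ^ (r + 1) = 2 * (t + p * s) + 1 := by
        rw [pow_succ, hs]
        linear_combination ht
      have h2 : (p - 1) / 2 = t := by omega
      have h3 : (p ^ r - 1) / 2 = s := by omega
      rw [h2, h3]
      omega
    rw [hdigit, apC_add_mul_cast (by omega), ih, pow_succ, mul_comm]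
end

section
/- Let p > 2 be a prime with p ≡ 1 or 3 (mod 8), and write p = c² + 2d² with c, d integers. Then for every integer r ≥ 1: (−1)^((p^r − 1)/2) · D((p^r − 1)/2) ≡ (c + d√−2)^(2r) + (c − d√−2)^(2r) (mod p), where the right-hand side is the integer β_{2r+1}(p). -/
/-!
Write `n = (p - 1) / 2` and `j = ⌊p / 8⌋`. The congruence is reduced to `r = 1` and then to the
two congruences `(-1)ⁿ D(n) ≡ C(n, j)²` and `C(n, j)² ≡ 4c²` modulo `p`.

*Reduction.* All base-`p` digits of `(pʳ - 1) / 2` equal `n`, so Lucas' congruence for binomial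
coefficients gives `D((pʳ - 1) / 2) ≡ D(n)ʳ` (`apD_lucas`, `apD_half_pow_mod`). On the other side
`(c + d√-2)²` and its conjugate have product `p²` and sum `2c² - 4d² ≡ 4c²`, so the sum of their
`r`-th powers is `≡ (4c²)ʳ` (`trace_mod`).

*The value of `D(n)`.* MacMahon's identity (`macmahon`)
`∑ C(n,k)³ = ∑ C(n,2k) C(2k,k) C(n+k,k) 2ⁿ⁻²ᵏ` becomes, since `n ≡ -1/2`, the sum
`2ⁿ ∑ (-1/4)ᵏ C(2k,k)² C(m+k,2k)` with `m = ⌊p / 4⌋ = 2j`. This is a terminating `₃F₂` at `1` of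
Whipple's type, equal to `C(2j,j)² / 16ʲ` by a Zeilberger recurrence in `m` (`whipple_sum`).
As `-2` is a square modulo `p`, `(-2)ⁿ ≡ 1`, and `C(2j,j) ≡ (-4)ʲ C(n,j)`; see `apD_half_mod`.

*The value of `C(n, j)²`.* For a finite field with `q = 8M + 1` elements and quadratic character `η`
put `S(a) = ∑ₓ η(x) η(x⁴ + a)`. The second moment `∑ₐ S(a)² = 4q(q - 1)` and the twisting
relations between the `S(a)` show `q = A² + 2B²` with `S(1) = 4A`, while Euler's criterion gives
`S(1) = -2 C(4M, M)` in the field (`exists_repr`). If `p ≡ 1 (mod 8)` this is applied to the field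
with `p` elements, and uniqueness of `p = c² + 2d²` gives `A² = c²`. If `p ≡ 3 (mod 8)` it is
applied to the field with `p²` elements: there `C(4M, M) ≡ C(n, j)²` by Lucas, and
`A + B√-2` is up to sign and conjugation `(c + d√-2)²`, so `C(n, j)² ≡ ±4c²`; the sign is `+`
because `-1` is not a square modulo `p`.
-/

/-- Zagier's sporadic Apéry-like sequence `D(n) = ∑_{k=0}^{n} C(n,k)³`. -/
def apD (n : ℕ) : ℤ :=
  ∑ k ∈ Finset.range (n + 1), (n.choose k : ℤ) ^ 3

/-! ### MacMahon's identity -/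

theorem vandermonde (a b n : ℕ) :
    ∑ i ∈ Finset.range (n + 1), a.choose i * b.choose (n - i) = (a + b).choose n := by
  rw [Nat.add_choose_eq, Finset.Nat.sum_antidiagonal_eq_sum_range_succ_mk]

theorem sum_choose_mul_choose_mul_choose (a b i : ℕ) (hi : i ≤ a) :
    ∑ j ∈ Finset.range (a + 1), a.choose j * b.choose j * j.choose i =
      a.choose i * (a + b - i).choose a := by
  have h := vandermonde b (a - i) a
  rw [show a + b - i = b + (a - i) by omega, ← h, Finset.mul_sum]
  refine Finset.sum_congr rfl fun j hj => ?_
  rw [Finset.mem_range] at hj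
  by_cases hij : i ≤ j
  · have h1 := Nat.choose_mul (n := a) hij
    rw [← Nat.choose_symm (show a - j ≤ a - i by omega), show a - i - (a - j) = j - i by omega]
    linear_combination b.choose j * h1
  · rw [Nat.choose_eq_zero_of_lt (show j < i by omega),
      Nat.choose_eq_zero_of_lt (show a - i < a - j by omega)]
    simp

/-- Riordan's identity: expand `C(x + j, a + b)` by Vandermonde in `C(j, i)`, sum over `j`, and
then over `i`. -/
theorem riordan (a b x : ℕ) (hx : a ≤ x) :
    ∑ j ∈ Finset.range (a + 1), a.choose j * b.choose j * (x + j).choose (a + b) =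
      x.choose a * x.choose b := by
  have h1 : ∀ j, a.choose j * b.choose j * (x + j).choose (a + b) =
      ∑ i ∈ Finset.range (b + 1),
        a.choose j * b.choose j * (j.choose i * x.choose (a + b - i)) := by
    intro j
    rw [← Finset.mul_sum]
    by_cases hj : j ≤ b
    · congr 1
      rw [add_comm x, ← vandermonde]
      symm
      apply Finset.sum_subset
      · intro i; simp only [Finset.mem_range]; omega
      · intro i _ hi
        rw [Finset.mem_range] at hi
        rw [Nat.choose_eq_zero_of_lt (show j < i by omega), zero_mul]
    · rw [Nat.choose_eq_zero_of_lt (show b < j by omega)]; simp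
  rw [Finset.sum_congr rfl fun j _ => h1 j, Finset.sum_comm]
  have h2 : ∀ i ∈ Finset.range (b + 1),
      ∑ j ∈ Finset.range (a + 1), a.choose j * b.choose j * (j.choose i * x.choose (a + b - i)) =
        x.choose a * (a.choose i * (x - a).choose (b - i)) := by
    intro i hi
    rw [Finset.mem_range] at hi
    simp_rw [← mul_assoc, ← Finset.sum_mul]
    by_cases hia : i ≤ a
    · rw [sum_choose_mul_choose_mul_choose a b i hia]
      have h3 := Nat.choose_mul (n := x) (k := a + b - i) (s := a) (by omega)
      rw [show a + b - i - a = b - i by omega] at h3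
      linear_combination a.choose i * h3
    · rw [Nat.choose_eq_zero_of_lt (show a < i by omega), Finset.sum_eq_zero]
      · simp
      · intro j hj
        rw [Finset.mem_range] at hj
        rw [Nat.choose_eq_zero_of_lt (show j < i by omega), mul_zero]
  rw [Finset.sum_congr rfl h2, ← Finset.mul_sum, vandermonde, Nat.add_sub_cancel' hx]

theorem choose_split {n k j : ℕ} (hjk : j ≤ k) (hk : k + j ≤ n) :
    n.choose k * (k.choose j * (n - k).choose j) =
      n.choose (2 * j) * (2 * j).choose j * (n - 2 * j).choose (k - j) := by
  have h1 := Nat.choose_mul (n := n) hjk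
  have h2 := Nat.choose_mul (n := n) (k := 2 * j) (s := j) (by omega)
  have h3 := Nat.choose_mul (n := n - j) (k := k) (s := j) hjk
  have h4 := Nat.choose_mul (n := n - j) (k := k) (s := k - j) (by omega)
  have h5 := Nat.choose_symm (n := k) (k := j) hjk
  rw [show n - j - j = n - 2 * j by omega] at h3
  rw [show n - j - (k - j) = n - k by omega, show k - (k - j) = j by omega] at h4
  rw [show 2 * j - j = j by omega] at h2
  rw [h5] at h4
  rw [← mul_assoc, h1, h2]
  rw [mul_assoc, ← h4, h3, mul_assoc]

/-- MacMahon's identity. By `riordan` with `x = n`, the square `C(n,k)²` is the sum over `j` of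
`C(k,j) C(n-k,j) C(n+j,n)`; the sum over `k` is then a row sum of Pascal's triangle. -/
theorem macmahon (n : ℕ) :
    ∑ k ∈ Finset.range (n + 1), n.choose k ^ 3 =
      ∑ j ∈ Finset.range (n / 2 + 1),
        n.choose (2 * j) * (2 * j).choose j * (n + j).choose j * 2 ^ (n - 2 * j) := by
  have h1 : ∀ k ∈ Finset.range (n + 1), n.choose k ^ 3 =
      ∑ j ∈ Finset.range (n / 2 + 1),
        n.choose k * (k.choose j * (n - k).choose j) * (n + j).choose j := by
    intro k hk
    rw [Finset.mem_range] at hk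
    have h := riordan k (n - k) n (by omega)
    rw [show k + (n - k) = n by omega, Nat.choose_symm (by omega : k ≤ n)] at h
    rw [show n.choose k ^ 3 = n.choose k * (n.choose k * n.choose k) by ring, ← h,
      Finset.mul_sum]
    have h2 : ∀ s : Finset ℕ, ∑ j ∈ s, n.choose k * (k.choose j * (n - k).choose j *
        (n + j).choose n) = ∑ j ∈ s, n.choose k * (k.choose j * (n - k).choose j) *
          (n + j).choose j := by
      intro s
      refine Finset.sum_congr rfl fun j _ => ?_
      rw [Nat.choose_symm_add, ← mul_assoc]
    rw [h2]
    have hz : ∀ j, k < j ∨ n < k + j → n.choose k * (k.choose j * (n - k).choose j) *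
          (n + j).choose j = 0 := by
      rintro j (hj | hj)
      · rw [Nat.choose_eq_zero_of_lt hj]; simp
      · rw [Nat.choose_eq_zero_of_lt (show n - k < j by omega)]; simp
    rw [Finset.sum_subset (s₁ := Finset.range (k + 1)) (s₂ := Finset.range (n + 1)),
      Finset.sum_subset (s₁ := Finset.range (n / 2 + 1)) (s₂ := Finset.range (n + 1))]
    · intro j; simp only [Finset.mem_range]; omega
    · intro j; simp only [Finset.mem_range]; intro _ _; apply hz; omega
    · intro j; simp only [Finset.mem_range]; omega
    · intro j; simp only [Finset.mem_range]; intro _ _; apply hz; omega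
  rw [Finset.sum_congr rfl h1, Finset.sum_comm]
  refine Finset.sum_congr rfl fun j hj => ?_
  rw [Finset.mem_range] at hj
  rw [← Finset.sum_mul]
  have h3 : ∑ k ∈ Finset.range (n + 1), n.choose k * (k.choose j * (n - k).choose j) =
      n.choose (2 * j) * (2 * j).choose j * 2 ^ (n - 2 * j) := by
    rw [← Nat.sum_range_choose (n - 2 * j), Finset.mul_sum]
    symm
    apply Finset.sum_of_injOn (fun l => l + j)
    · intro x _ y _ h; simpa using h
    · intro x hx
      simp only [Finset.coe_range, Set.mem_Iio] at hx ⊢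
      omega
    · intro k hk hk'
      simp only [Finset.coe_range, Finset.mem_range, Set.mem_image, Set.mem_Iio, not_exists,
        not_and] at hk hk'
      by_cases hkj : k < j
      · rw [Nat.choose_eq_zero_of_lt hkj]; simp
      · have := hk' (k - j)
        rw [Nat.choose_eq_zero_of_lt (show n - k < j by omega)]; simp
    · intro l hl
      rw [Finset.mem_range] at hl
      rw [choose_split (by omega) (by omega), Nat.add_sub_cancel]
  rw [h3]; ring

/-! ### A terminating sum of Whipple type -/

/-- Creative telescoping for the recurrence `(m + 2)² s(m + 2) = (m + 1)² s(m)` satisfied by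
`s(m) = ∑ₖ (-1/4)ᵏ C(2k,k)² C(m+k,2k)`: the right-hand side is the certificate, which vanishes
for `K > m + 1`. -/
theorem whipple_telescope (m K : ℕ) :
    ∑ k ∈ Finset.range (K + 1), (-1 / 4 : ℚ) ^ k * ((2 * k).choose k : ℚ) ^ 2 *
      ((m + 2 : ℚ) ^ 2 * ((m + 2 + k).choose (2 * k) : ℚ) -
        (m + 1 : ℚ) ^ 2 * ((m + k).choose (2 * k) : ℚ)) =
    (2 * m + 3) * (2 * K + 1) * (-1 / 4 : ℚ) ^ K * ((2 * K).choose K : ℚ) ^ 2 *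
      ((m + K + 1).choose (2 * K) : ℚ) := by
  induction K with
  | zero => simp; ring
  | succ K ih =>
    rw [Finset.sum_range_succ, ih]
    have hc : ((2 * (K + 1)).choose (K + 1) : ℚ) = 2 * (2 * K + 1) / (K + 1) *
        ((2 * K).choose K : ℚ) := by
      have h := Nat.succ_mul_centralBinom_succ K
      rw [Nat.centralBinom, Nat.centralBinom] at h
      have h' : ((K : ℚ) + 1) * ((2 * (K + 1)).choose (K + 1) : ℚ) =
        2 * (2 * K + 1) * ((2 * K).choose K : ℚ) := by exact_mod_cast h
      field_simp
      linear_combination h'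
    have e1 : (m + 2 + (K + 1)).choose (2 * (K + 1)) = (m + K + 1).choose (2 * K) +
        2 * (m + K + 1).choose (2 * K + 1) + (m + K + 1).choose (2 * K + 2) := by
      rw [show m + 2 + (K + 1) = (m + K + 1) + 1 + 1 by ring,
        show 2 * (K + 1) = 2 * K + 1 + 1 by ring]
      simp only [Nat.choose_succ_succ']
      ring
    have e2 : (m + (K + 1) + 1).choose (2 * (K + 1)) =
        (m + K + 1).choose (2 * K + 1) + (m + K + 1).choose (2 * K + 2) := by
      rw [show m + (K + 1) + 1 = (m + K + 1) + 1 by ring,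
        show 2 * (K + 1) = 2 * K + 1 + 1 by ring]
      simp only [Nat.choose_succ_succ']
    -- both sides become rational multiples of `C(m + K + 1, 2K)`
    have key : ∀ x l : ℕ, ((l : ℚ) + 1) * (x.choose (l + 1) : ℚ) = (x - l) * (x.choose l : ℚ) := by
      intro x l
      have h := Nat.choose_succ_right_eq x l
      rcases le_or_gt l x with hlx | hlx
      · have : ((x.choose (l + 1) * (l + 1) : ℕ) : ℚ) = ((x.choose l * (x - l) : ℕ) : ℚ) := by
          rw [h]
        push_cast [Nat.cast_sub hlx] at this
        linear_combination this
      · rw [Nat.choose_eq_zero_of_lt hlx, Nat.choose_eq_zero_of_lt (by omega)]; simp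
    have k1 := key (m + K + 1) (2 * K)
    have k2 := key (m + K + 1) (2 * K + 1)
    rw [e1, e2, show m + (K + 1) = m + K + 1 by ring, hc,
      show 2 * (K + 1) = 2 * K + 1 + 1 by ring]
    push_cast at k1 k2 ⊢
    generalize ((m + K + 1).choose (2 * K) : ℚ) = A at *
    have hB : ((m + K + 1).choose (2 * K + 1) : ℚ) = (m - K + 1) / (2 * K + 1) * A := by
      field_simp
      linear_combination k1
    rw [hB] at k2 ⊢
    have hC : ((m + K + 1).choose (2 * K + 1 + 1) : ℚ) =
        (m - K) / (2 * K + 2) * ((m - K + 1) / (2 * K + 1) * A) := by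
      field_simp
      field_simp at k2
      linear_combination k2
    rw [hC, pow_succ]
    field_simp
    ring

theorem whipple_sum (j : ℕ) :
    ∑ k ∈ Finset.range (2 * j + 1), (-1 / 4 : ℚ) ^ k * ((2 * k).choose k : ℚ) ^ 2 *
      ((2 * j + k).choose (2 * k) : ℚ) = ((2 * j).choose j : ℚ) ^ 2 / 16 ^ j := by
  induction j with
  | zero => simp
  | succ j ih =>
    have h := whipple_telescope (2 * j) (2 * j + 2)
    rw [Nat.choose_eq_zero_of_lt (show 2 * j + (2 * j + 2) + 1 < 2 * (2 * j + 2) by omega)] at h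
    have h1 : ∑ k ∈ Finset.range (2 * j + 2 + 1), (-1 / 4 : ℚ) ^ k * ((2 * k).choose k : ℚ) ^ 2 *
        ((2 * j + k).choose (2 * k) : ℚ) = ((2 * j).choose j : ℚ) ^ 2 / 16 ^ j := by
      rw [← ih]
      symm
      apply Finset.sum_subset
      · intro i; simp only [Finset.mem_range]; omega
      · intro i _ hi
        rw [Finset.mem_range] at hi
        rw [Nat.choose_eq_zero_of_lt (show 2 * j + i < 2 * i by omega)]; simp
    have h2 : (2 * j + 2 : ℚ) ^ 2 * ∑ k ∈ Finset.range (2 * j + 2 + 1),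
        (-1 / 4 : ℚ) ^ k * ((2 * k).choose k : ℚ) ^ 2 * ((2 * j + 2 + k).choose (2 * k) : ℚ) =
        (2 * j + 1 : ℚ) ^ 2 * ∑ k ∈ Finset.range (2 * j + 2 + 1),
        (-1 / 4 : ℚ) ^ k * ((2 * k).choose k : ℚ) ^ 2 * ((2 * j + k).choose (2 * k) : ℚ) := by
      rw [← sub_eq_zero, Finset.mul_sum, Finset.mul_sum, ← Finset.sum_sub_distrib]
      push_cast at h
      rw [mul_zero] at h
      rw [← h]
      refine Finset.sum_congr rfl fun k _ => ?_
      ring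
    rw [h1] at h2
    have hc := Nat.succ_mul_centralBinom_succ j
    rw [Nat.centralBinom, Nat.centralBinom] at hc
    have hc' : ((2 * (j + 1)).choose (j + 1) : ℚ) =
        2 * (2 * j + 1) * ((2 * j).choose j : ℚ) / (j + 1) := by
      rw [eq_div_iff (by positivity), mul_comm]
      exact_mod_cast hc
    rw [hc', show 2 * (j + 1) = 2 * j + 2 by ring]
    have hj : (2 * j + 2 : ℚ) ^ 2 ≠ 0 := by positivity
    apply mul_left_cancel₀ hj
    rw [h2]
    field_simp
    ring

/-- `whipple_sum` in a field where `2` is invertible; multiplied by `16ʲ` it is an identity between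
integers. -/
theorem whipple_field {K : Type*} [Field K] (h2 : (2 : K) ≠ 0) (j : ℕ) :
    ∑ k ∈ Finset.range (2 * j + 1), (-1 / 4 : K) ^ k * ((2 * k).choose k : K) ^ 2 *
      ((2 * j + k).choose (2 * k) : K) = ((2 * j).choose j : K) ^ 2 / 16 ^ j := by
  have hZ : ∑ k ∈ Finset.range (2 * j + 1), (-1 : ℤ) ^ k * 4 ^ (2 * j - k) *
      ((2 * k).choose k : ℤ) ^ 2 * ((2 * j + k).choose (2 * k) : ℤ) =
      ((2 * j).choose j : ℤ) ^ 2 := by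
    have h := whipple_sum j
    rw [eq_div_iff (by positivity), Finset.sum_mul] at h
    have : ∑ k ∈ Finset.range (2 * j + 1), (-1 : ℚ) ^ k * 4 ^ (2 * j - k) *
      ((2 * k).choose k : ℚ) ^ 2 * ((2 * j + k).choose (2 * k) : ℚ) =
      ((2 * j).choose j : ℚ) ^ 2 := by
      rw [← h]
      refine Finset.sum_congr rfl fun k hk => ?_
      rw [Finset.mem_range] at hk
      rw [show (16 : ℚ) ^ j = 4 ^ (2 * j - k) * 4 ^ k by
        rw [← pow_add, show 2 * j - k + k = 2 * j by omega, pow_mul]; norm_num, div_pow]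
      field_simp
    exact_mod_cast this
  have h4 : (4 : K) ≠ 0 := by
    rw [show (4 : K) = 2 * 2 by norm_num]; exact mul_ne_zero h2 h2
  have h16 : (16 : K) ≠ 0 := by
    rw [show (16 : K) = 4 * 4 by norm_num]; exact mul_ne_zero h4 h4
  have hK := congrArg (Int.cast : ℤ → K) hZ
  push_cast at hK
  rw [eq_div_iff (pow_ne_zero _ h16), ← hK, Finset.sum_mul]
  refine Finset.sum_congr rfl fun k hk => ?_
  rw [Finset.mem_range] at hk
  rw [show (16 : K) ^ j = 4 ^ (2 * j - k) * 4 ^ k by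
    rw [← pow_add, show 2 * j - k + k = 2 * j by omega, pow_mul]; norm_num, div_pow]
  field_simp

/-! ### Franel numbers at `(p - 1) / 2` modulo `p` -/

theorem choose_succ_cast {K : Type*} [CommRing K] (x l : ℕ) :
    ((l : K) + 1) * (x.choose (l + 1) : K) = (x - l) * (x.choose l : K) := by
  have h := Nat.choose_succ_right_eq x l
  rcases le_or_gt l x with hlx | hlx
  · have : ((x.choose (l + 1) * (l + 1) : ℕ) : K) = ((x.choose l * (x - l) : ℕ) : K) := by
      rw [h]
    push_cast [Nat.cast_sub hlx] at this
    linear_combination this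
  · rw [Nat.choose_eq_zero_of_lt hlx, Nat.choose_eq_zero_of_lt (by omega)]; simp

section ModP

variable {p : ℕ} [Fact p.Prime]

theorem natCast_succ_ne_zero {k : ℕ} (hk : k + 1 < p) : ((k : ZMod p) + 1) ≠ 0 := by
  intro h
  have : ((k + 1 : ℕ) : ZMod p) = 0 := by push_cast; exact h
  rw [ZMod.natCast_eq_zero_iff] at this
  exact absurd (Nat.le_of_dvd (by omega) this) (by omega)

/-- Modulo `p = 2n + 1` one has `n = -1/2`, and `C(-1/2, k) = C(2k, k) / (-4)ᵏ`. -/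
theorem centralBinom_mod {n : ℕ} (hn : 2 * n + 1 = p) (k : ℕ) (hk : k < p) :
    ((2 * k).choose k : ZMod p) = (-4) ^ k * (n.choose k : ZMod p) := by
  have hn' : (2 * n + 1 : ZMod p) = 0 := by
    have : ((2 * n + 1 : ℕ) : ZMod p) = 0 := by rw [hn]; simp
    exact_mod_cast this
  induction k with
  | zero => simp
  | succ k ih =>
    have hc := Nat.succ_mul_centralBinom_succ k
    rw [Nat.centralBinom, Nat.centralBinom] at hc
    have hc' : ((k : ZMod p) + 1) * ((2 * (k + 1)).choose (k + 1) : ZMod p) =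
        2 * (2 * k + 1) * ((2 * k).choose k : ZMod p) := by exact_mod_cast congrArg _ hc
    apply mul_left_cancel₀ (natCast_succ_ne_zero hk)
    rw [hc', ih (by omega)]
    have h := choose_succ_cast (K := ZMod p) n k
    linear_combination (-(-4) ^ (k + 1)) * h + 2 * (-4) ^ k * (n.choose k : ZMod p) * hn'

/-- `C(n + k, k) = (-1)ᵏ C(-n - 1, k)`, and `-n - 1 = n` modulo `p = 2n + 1`. -/
theorem choose_add_mod {n : ℕ} (hn : 2 * n + 1 = p) (k : ℕ) (hk : k < p) :
    ((n + k).choose k : ZMod p) = (-1) ^ k * (n.choose k : ZMod p) := by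
  have hn' : (2 * n + 1 : ZMod p) = 0 := by
    have : ((2 * n + 1 : ℕ) : ZMod p) = 0 := by rw [hn]; simp
    exact_mod_cast this
  induction k with
  | zero => simp
  | succ k ih =>
    have hc := Nat.add_one_mul_choose_eq (n + k) k
    have hc' : ((n : ZMod p) + k + 1) * ((n + k).choose k : ZMod p) =
        ((n + (k + 1)).choose (k + 1) : ZMod p) * (k + 1) := by exact_mod_cast congrArg _ hc
    apply mul_left_cancel₀ (natCast_succ_ne_zero hk)
    rw [ih (by omega)] at hc'
    have h := choose_succ_cast (K := ZMod p) n k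
    linear_combination (-(-1) ^ (k + 1)) * h - hc' + (-1) ^ k * (n.choose k : ZMod p) * hn'

/-- The hypothesis on `m` says `m = -1/4` or `m = -3/4` modulo `p`; with `n = -1/2` the ratios of
consecutive terms on the two sides agree. -/
theorem choose_two_mul_mod {n m : ℕ} (hn : 2 * n + 1 = p)
    (hm : (16 * m * (m + 1) + 3 : ZMod p) = 0) (k : ℕ) (hk : 2 * k < p) :
    (n.choose (2 * k) : ZMod p) = (-4) ^ k * ((m + k).choose (2 * k) : ZMod p) := by
  have hn' : (2 * n + 1 : ZMod p) = 0 := by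
    have : ((2 * n + 1 : ℕ) : ZMod p) = 0 := by rw [hn]; simp
    exact_mod_cast this
  have h2 : (2 : ZMod p) ≠ 0 := by
    intro h
    rw [h] at hn'
    simp at hn'
  have h4 : (4 : ZMod p) ≠ 0 := by
    rw [show (4 : ZMod p) = 2 * 2 by norm_num]; exact mul_ne_zero h2 h2
  induction k with
  | zero => simp
  | succ k ih =>
    have hc := Nat.add_one_mul_choose_eq (m + k) (2 * k + 1)
    have hc' : ((m : ZMod p) + k + 1) * ((m + k).choose (2 * k + 1) : ZMod p) =
        ((m + (k + 1)).choose (2 * (k + 1)) : ZMod p) * (2 * k + 1 + 1) := by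
      exact_mod_cast congrArg _ hc
    have h3 := choose_succ_cast (K := ZMod p) (m + k) (2 * k)
    have h5 := choose_succ_cast (K := ZMod p) n (2 * k)
    have h6 := choose_succ_cast (K := ZMod p) n (2 * k + 1)
    rw [show 2 * k + 1 + 1 = 2 * (k + 1) by ring] at h6
    have n1 := natCast_succ_ne_zero (p := p) (k := 2 * k) (by omega)
    have n2 := natCast_succ_ne_zero (p := p) (k := 2 * k + 1) (by omega)
    push_cast at n1 n2 h3 h5 h6
    apply mul_left_cancel₀ n1
    apply mul_left_cancel₀ n2
    apply mul_left_cancel₀ h4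
    rw [ih (by omega)] at h5
    generalize (n.choose (2 * k) : ZMod p) = a1 at *
    generalize (n.choose (2 * k + 1) : ZMod p) = a2 at *
    generalize (n.choose (2 * (k + 1)) : ZMod p) = a3 at *
    generalize ((m + k).choose (2 * k) : ZMod p) = b1 at *
    generalize ((m + k).choose (2 * k + 1) : ZMod p) = b2 at *
    generalize ((m + (k + 1)).choose (2 * (k + 1)) : ZMod p) = b3 at *
    have e1 : (2 * (k : ZMod p) + 1) * ((2 * k + 1 + 1) * a3) =
        (n - (2 * k + 1)) * (n - 2 * k) * ((-4) ^ k * b1) := by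
      linear_combination (2 * (k : ZMod p) + 1) * h6 + (n - (2 * k + 1)) * h5
    have e2 : (2 * (k : ZMod p) + 1) * ((2 * k + 1 + 1) * b3) =
        (m + k + 1) * (m - k) * b1 := by
      linear_combination (-(2 * (k : ZMod p) + 1)) * hc' + (m + k + 1) * h3
    have hnn : (n : ZMod p) = - 1 / 2 := by
      rw [eq_div_iff h2]; linear_combination hn'
    have e3 : 4 * ((n - (2 * k + 1)) * (n - 2 * k)) = (4 * k + 3) * (4 * k + (1 : ZMod p)) := by
      rw [hnn]; field_simp; ring
    linear_combination 4 * e1 + ((-4) ^ k * b1) * e3 - 4 * (-4) ^ (k + 1) * e2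
      + (-4) ^ k * b1 * hm

/-- Modulo `p`, the MacMahon form of `D((p - 1) / 2)` becomes the sum of `whipple_field`. -/
theorem apD_half_mod {n j : ℕ} (hn : 2 * n + 1 = p) (hj : n / 2 = 2 * j)
    (hp8 : p % 8 = 1 ∨ p % 8 = 3) :
    (-1) ^ n * (apD n : ZMod p) = (n.choose j : ZMod p) ^ 2 := by
  have hn' : (2 * n + 1 : ZMod p) = 0 := by
    have : ((2 * n + 1 : ℕ) : ZMod p) = 0 := by rw [hn]; simp
    exact_mod_cast this
  have h2 : (2 : ZMod p) ≠ 0 := by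
    intro h
    rw [h] at hn'
    simp at hn'
  have h4 : (4 : ZMod p) ≠ 0 := by
    rw [show (4 : ZMod p) = 2 * 2 by norm_num]; exact mul_ne_zero h2 h2
  have h16 : (16 : ZMod p) ≠ 0 := by
    rw [show (16 : ZMod p) = 4 * 4 by norm_num]; exact mul_ne_zero h4 h4
  have hm : (16 * (2 * j : ℕ) * ((2 * j : ℕ) + 1) + 3 : ZMod p) = 0 := by
    rcases (show n = 2 * (2 * j) ∨ n = 2 * (2 * j) + 1 by omega) with h | h
    · rw [h] at hn'; push_cast at hn' ⊢; linear_combination (4 * (2 * j : ZMod p) + 3) * hn'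
    · rw [h] at hn'; push_cast at hn' ⊢; linear_combination (4 * (2 * j : ZMod p) + 1) * hn'
  have hneg2 : (-2 : ZMod p) ^ n = 1 := by
    have hsq := (ZMod.exists_sq_eq_neg_two_iff (p := p) (by omega)).2 hp8
    rw [ZMod.euler_criterion p (neg_ne_zero.2 h2)] at hsq
    rwa [show p / 2 = n by omega] at hsq
  have hD : (apD n : ZMod p) = ((∑ k ∈ Finset.range (n + 1), n.choose k ^ 3 : ℕ) : ZMod p) := by
    simp [apD]
  rw [hD, macmahon, hj]
  push_cast
  have hterm : ∀ k ∈ Finset.range (2 * j + 1),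
      (n.choose (2 * k) : ZMod p) * ((2 * k).choose k : ZMod p) * ((n + k).choose k : ZMod p) *
        2 ^ (n - 2 * k) = 2 ^ n * ((-1 / 4 : ZMod p) ^ k * ((2 * k).choose k : ZMod p) ^ 2 *
      ((2 * j + k).choose (2 * k) : ZMod p)) := by
    intro k hk
    rw [Finset.mem_range] at hk
    have c1 := centralBinom_mod hn k (by omega)
    rw [choose_add_mod hn k (by omega), choose_two_mul_mod hn hm k (by omega)]
    have c2 : (n.choose k : ZMod p) = ((2 * k).choose k : ZMod p) / (-4) ^ k := by
      rw [c1, mul_div_cancel_left₀ _ (pow_ne_zero _ (neg_ne_zero.2 h4))]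
    rw [c2, show (2 : ZMod p) ^ n = 2 ^ (n - 2 * k) * 4 ^ k by
      rw [show (4 : ZMod p) = 2 ^ 2 by norm_num, ← pow_mul, ← pow_add]; congr 1; omega, div_pow]
    have : (-4 : ZMod p) ^ k ≠ 0 := pow_ne_zero _ (neg_ne_zero.2 h4)
    field_simp
  rw [Finset.sum_congr rfl hterm, ← Finset.mul_sum, whipple_field h2, ← mul_assoc, ← mul_pow,
    show (-1 : ZMod p) * 2 = -2 by norm_num, hneg2, one_mul, centralBinom_mod hn j (by omega),
    mul_pow, ← pow_mul, mul_comm j 2, pow_mul, show (-4 : ZMod p) ^ 2 = 16 by norm_num,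
    mul_div_cancel_left₀ _ (pow_ne_zero _ h16)]

end ModP

/-! ### Jacobsthal sums and representations by `A² + 2B²` -/

section FiniteField

variable {F : Type*} [Field F] [Fintype F] [DecidableEq F]

/-- The Jacobsthal-type sum `∑ₓ η(x) η(x⁴ + a)`, where `η` is the quadratic character of `F`. -/
def quarticSum (a : F) : ℤ := ∑ x : F, quadraticChar F x * quadraticChar F (x ^ 4 + a)

theorem sum_range_periodic (f : ℕ → ℤ) (M t : ℕ) (hf : ∀ k, f (k + M) = f k) :
    ∑ k ∈ Finset.range (M * t), f k = t * ∑ k ∈ Finset.range M, f k := by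
  induction t with
  | zero => simp
  | succ t ih =>
    have h : ∀ s k, f (M * s + k) = f k := by
      intro s
      induction s with
      | zero => simp
      | succ s ihs =>
        intro k
        rw [show M * (s + 1) + k = M * s + k + M by ring, hf, ihs]
    rw [Nat.mul_succ, Finset.sum_range_add, ih]
    simp_rw [h]
    push_cast
    ring

theorem sum_eq_sum_range_generator {g : Fˣ} (hg : ∀ u : Fˣ, u ∈ Subgroup.zpowers g) (f : F → ℤ)
    (h0 : f 0 = 0) :
    ∑ x : F, f x = ∑ k ∈ Finset.range (Fintype.card F - 1), f ((g : F) ^ k) := by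
  have hcard : Nat.card Fˣ = Fintype.card F - 1 := by
    rw [Nat.card_eq_fintype_card, Fintype.card_units]
  have h1 : ∑ x : F, f x = ∑ u : Fˣ, f (u : F) := by
    symm
    apply Finset.sum_of_injOn (fun u : Fˣ => (u : F))
    · intro a _ b _ h; exact Units.ext h
    · intro x _; simp
    · intro x _ hx
      by_cases hx0 : x = 0
      · rw [hx0, h0]
      · exact absurd ⟨Units.mk0 x hx0, by simp⟩ hx
    · intros; rfl
  rw [h1, ← IsCyclic.image_range_card hg, Finset.sum_image, hcard]
  · simp
  · intro a ha b hb h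
    simp only [Finset.coe_range, Set.mem_Iio] at ha hb
    rw [← orderOf_eq_card_of_forall_mem_zpowers hg] at ha hb
    exact pow_injOn_Iio_orderOf (by simpa using ha) (by simpa using hb) h

theorem ringChar_ne_two_of_card (hq : Fintype.card F % 8 = 1) : ringChar F ≠ 2 := by
  intro h
  have := FiniteField.even_card_iff_char_two.1 h
  omega

theorem quadraticChar_generator (hF : ringChar F ≠ 2) {g : Fˣ}
    (hg : ∀ u : Fˣ, u ∈ Subgroup.zpowers g) : quadraticChar F (g : F) = -1 := by
  rcases quadraticChar_dichotomy g.ne_zero with h | h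
  · obtain ⟨u, hu⟩ := quadraticChar_exists_neg_one' hF
    obtain ⟨k, hk⟩ := (mem_powers_iff_mem_zpowers).2 (hg u)
    have hk' : g ^ k = u := hk
    rw [← hk', Units.val_pow_eq_pow_val, map_pow, h, one_pow] at hu
    norm_num at hu
  · exact h

/-- If `q - 1 = 4N` then multiplication by `g ^ N`, a fourth root of unity, cuts the sum over `F`
into four equal parts. -/
theorem sum_eq_four_mul {g : Fˣ} (hg : ∀ u : Fˣ, u ∈ Subgroup.zpowers g) {N : ℕ}
    (hN : Fintype.card F = 4 * N + 1) (f : F → ℤ) (h0 : f 0 = 0)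
    (hf : ∀ x, f (x * (g : F) ^ N) = f x) :
    ∑ x : F, f x = 4 * ∑ k ∈ Finset.range N, f ((g : F) ^ k) := by
  rw [sum_eq_sum_range_generator hg f h0, hN, Nat.add_sub_cancel, mul_comm 4 N,
    sum_range_periodic (fun k => f ((g : F) ^ k)) N 4]
  · norm_num
  · intro k
    simp only [pow_add, hf]

theorem generator_pow_card {g : Fˣ} {N : ℕ} (hN : Fintype.card F = 4 * N + 1) :
    ((g : F) ^ N) ^ 4 = 1 := by
  have := FiniteField.pow_card_sub_one_eq_one (g : F) g.ne_zero
  rwa [hN, Nat.add_sub_cancel, mul_comm, pow_mul] at this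

theorem quadraticChar_pow_even (g : Fˣ) {N : ℕ} (hN : Even N) :
    quadraticChar F ((g : F) ^ N) = 1 := by
  obtain ⟨M, rfl⟩ := hN
  rw [← two_mul, mul_comm, pow_mul]
  exact quadraticChar_sq_one' (pow_ne_zero _ g.ne_zero)

/-- Substitute `x ↦ u x`. -/
theorem quarticSum_mul_pow_four (a u : F) (hu : u ≠ 0) :
    quarticSum (a * u ^ 4) = quadraticChar F u * quarticSum a := by
  unfold quarticSum
  rw [Finset.mul_sum, ← Equiv.sum_comp (Equiv.mulLeft₀ u hu)]
  refine Finset.sum_congr rfl fun x _ => ?_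
  rw [Equiv.mulLeft₀_apply, show (u * x) ^ 4 + a * u ^ 4 = (u ^ 2) ^ 2 * (x ^ 4 + a) by ring,
    map_mul, map_mul, quadraticChar_sq_one' (pow_ne_zero _ hu)]
  ring

/-- Substitute `x ↦ x⁻¹`. -/
theorem quarticSum_inv (a : F) (ha : a ≠ 0) :
    quarticSum a = quadraticChar F a * quarticSum a⁻¹ := by
  unfold quarticSum
  rw [Finset.mul_sum, ← Equiv.sum_comp (Equiv.inv F)]
  refine Finset.sum_congr rfl fun x _ => ?_
  by_cases hx : x = 0
  · simp [hx]
  · have h1 : quadraticChar F x⁻¹ = quadraticChar F x := by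
      rw [show x⁻¹ = x * (x⁻¹) ^ 2 by field_simp, map_mul,
        quadraticChar_sq_one' (inv_ne_zero hx), mul_one]
    rw [Equiv.inv_apply, h1, show x⁻¹ ^ 4 + a = a * (x ^ 4 + a⁻¹) * ((x⁻¹) ^ 2) ^ 2 by field_simp; ring,
      map_mul, map_mul, quadraticChar_sq_one' (pow_ne_zero _ (inv_ne_zero hx))]
    ring

theorem quarticSum_zero (hF : ringChar F ≠ 2) : quarticSum (0 : F) = 0 := by
  unfold quarticSum
  rw [← quadraticChar_sum_zero hF]
  refine Finset.sum_congr rfl fun x _ => ?_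
  by_cases hx : x = 0
  · simp [hx]
  · rw [add_zero, show x ^ 4 = (x ^ 2) ^ 2 by ring, quadraticChar_sq_one' (pow_ne_zero _ hx),
      mul_one]

/-- For `b ≠ c` this is, after a linear substitution, the Jacobi sum of `η` with itself. -/
theorem sum_quadraticChar_shift (hF : ringChar F ≠ 2) (b c : F) :
    ∑ a : F, quadraticChar F (b + a) * quadraticChar F (c + a) =
      (if b = c then (Fintype.card F : ℤ) else 0) - 1 := by
  split_ifs with h
  · subst h
    have hs := Equiv.sum_comp (Equiv.addLeft b) (fun t => quadraticChar F t * quadraticChar F t)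
    simp only [Equiv.coe_addLeft] at hs
    rw [hs]
    rw [← Finset.add_sum_erase _ _ (Finset.mem_univ (0 : F))]
    rw [Finset.sum_congr rfl (g := fun _ => (1 : ℤ))]
    · simp [Finset.card_erase_of_mem, Fintype.card_pos]
    · intro x hx
      rw [← sq, quadraticChar_sq_one (Finset.ne_of_mem_erase hx)]
  · have hd : c - b ≠ 0 := sub_ne_zero.2 (Ne.symm h)
    have hd' : -(c - b) ≠ 0 := neg_ne_zero.2 hd
    have hJ := jacobiSum_nontrivial_inv (quadraticChar_ne_one hF)
    rw [(quadraticChar_isQuadratic F).inv, jacobiSum] at hJ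
    rw [← Equiv.sum_comp ((Equiv.mulLeft₀ _ hd').trans (Equiv.addLeft (-b)))]
    have : ∀ s : F, quadraticChar F (b + ((Equiv.mulLeft₀ _ hd').trans (Equiv.addLeft (-b))) s) *
        quadraticChar F (c + ((Equiv.mulLeft₀ _ hd').trans (Equiv.addLeft (-b))) s) =
        quadraticChar F (-1) * (quadraticChar F s * quadraticChar F (1 - s)) := by
      intro s
      simp only [Equiv.trans_apply, Equiv.mulLeft₀_apply, Equiv.coe_addLeft]
      rw [show b + (-b + -(c - b) * s) = (c - b) * (-1 * s) by ring,
        show c + (-b + -(c - b) * s) = (c - b) * (1 - s) by ring]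
      simp only [map_mul]
      linear_combination (quadraticChar F (-1) * quadraticChar F s * quadraticChar F (1 - s)) *
        quadraticChar_sq_one hd
    rw [Finset.sum_congr rfl fun s _ => this s, ← Finset.mul_sum, hJ]
    linear_combination - quadraticChar_sq_one (neg_ne_zero.2 (one_ne_zero (α := F)))

/-- Expanding the square and summing over `a` first leaves the pairs with `x⁴ = y⁴`; each `x ≠ 0`
contributes `4q`, since the fourth roots of unity are squares when `q ≡ 1 (mod 8)`. -/
theorem sum_quarticSum_sq (hq : Fintype.card F % 8 = 1) :
    ∑ a : F, quarticSum a ^ 2 = 4 * Fintype.card F * (Fintype.card F - 1) := by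
  have hF := ringChar_ne_two_of_card hq
  obtain ⟨g, hg⟩ := IsCyclic.exists_generator (α := Fˣ)
  obtain ⟨N, hN⟩ : ∃ N, Fintype.card F = 4 * N + 1 := ⟨Fintype.card F / 4, by omega⟩
  have hNe : Even N := by rw [Nat.even_iff]; omega
  have hroot : ∑ z : F, (if z ^ 4 = 1 then quadraticChar F z else 0) = 4 := by
    rw [sum_eq_four_mul hg hN _ (by simp)]
    · have hNpos : 0 < N := by
        have := Fintype.one_lt_card (α := F); omega
      rw [Finset.sum_eq_single_of_mem 0 (Finset.mem_range.2 hNpos)]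
      · simp
      · intro k hk hk0
        rw [Finset.mem_range] at hk
        rw [if_neg]
        intro h
        have h' : g ^ (k * 4) = 1 := by
          apply Units.ext; push_cast; rw [pow_mul]; exact h
        have := Nat.le_of_dvd (by omega) (orderOf_dvd_of_pow_eq_one h')
        rw [orderOf_eq_card_of_forall_mem_zpowers hg, Nat.card_eq_fintype_card,
          Fintype.card_units] at this
        omega
    · intro x
      rw [mul_pow, generator_pow_card hN, mul_one, map_mul, quadraticChar_pow_even g hNe, mul_one]
  have h1 : ∀ a : F, quarticSum a ^ 2 = ∑ x : F, ∑ y : F, quadraticChar F x * quadraticChar F y *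
      (quadraticChar F (x ^ 4 + a) * quadraticChar F (y ^ 4 + a)) := by
    intro a
    rw [sq, quarticSum, Finset.sum_mul_sum]
    refine Finset.sum_congr rfl fun x _ => Finset.sum_congr rfl fun y _ => ?_
    ring
  have h2 : ∑ a : F, quarticSum a ^ 2 = ∑ x : F, ∑ y : F, quadraticChar F x * quadraticChar F y *
      ((if x ^ 4 = y ^ 4 then (Fintype.card F : ℤ) else 0) - 1) := by
    rw [Finset.sum_congr rfl fun a _ => h1 a, Finset.sum_comm]
    refine Finset.sum_congr rfl fun x _ => ?_
    rw [Finset.sum_comm]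
    refine Finset.sum_congr rfl fun y _ => ?_
    rw [← Finset.mul_sum, sum_quadraticChar_shift hF]
  have h3 : ∀ x : F, ∑ y : F, quadraticChar F x * quadraticChar F y *
      ((if x ^ 4 = y ^ 4 then (Fintype.card F : ℤ) else 0) - 1) =
      if x = 0 then 0 else 4 * (Fintype.card F : ℤ) := by
    intro x
    split_ifs with hx
    · simp [hx]
    · simp_rw [mul_sub, mul_one, Finset.sum_sub_distrib, ← Finset.mul_sum,
        quadraticChar_sum_zero hF, mul_zero, sub_zero]
      rw [← Equiv.sum_comp (Equiv.mulLeft₀ x hx)]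
      have : ∀ z : F, quadraticChar F x * quadraticChar F (Equiv.mulLeft₀ x hx z) *
          (if x ^ 4 = (Equiv.mulLeft₀ x hx z) ^ 4 then (Fintype.card F : ℤ) else 0) =
          Fintype.card F * (if z ^ 4 = 1 then quadraticChar F z else 0) := by
        intro z
        have hiff : x ^ 4 = (x * z) ^ 4 ↔ z ^ 4 = 1 := by
          rw [mul_pow, eq_comm, mul_eq_left₀ (pow_ne_zero _ hx)]
        rw [Equiv.mulLeft₀_apply]
        by_cases hz : z ^ 4 = 1
        · rw [if_pos (hiff.2 hz), if_pos hz, map_mul]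
          linear_combination (Fintype.card F * quadraticChar F z) * quadraticChar_sq_one hx
        · rw [if_neg (mt hiff.1 hz), if_neg hz]; ring
      rw [Finset.sum_congr rfl fun z _ => this z, ← Finset.mul_sum, hroot]
      ring
  rw [h2, Finset.sum_congr rfl fun x _ => h3 x, Finset.sum_ite]
  have hcard : (Finset.univ.filter fun x : F => ¬ x = 0).card = Fintype.card F - 1 := by
    rw [Finset.filter_not, Finset.filter_eq']
    simp [Finset.card_sdiff]
  simp only [Finset.sum_const_zero, Finset.sum_const, hcard, zero_add, nsmul_eq_mul]
  rw [Nat.cast_sub Fintype.card_pos]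
  push_cast
  ring

theorem four_dvd_quarticSum (hq : Fintype.card F % 8 = 1) (a : F) : (4 : ℤ) ∣ quarticSum a := by
  obtain ⟨g, hg⟩ := IsCyclic.exists_generator (α := Fˣ)
  obtain ⟨N, hN⟩ : ∃ N, Fintype.card F = 4 * N + 1 := ⟨Fintype.card F / 4, by omega⟩
  have hNe : Even N := by rw [Nat.even_iff]; omega
  unfold quarticSum
  rw [sum_eq_four_mul hg hN _ (by simp)]
  · exact dvd_mul_right _ _
  · intro x
    rw [mul_pow, generator_pow_card hN, mul_one, map_mul, quadraticChar_pow_even g hNe, mul_one]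

/-- Up to sign `quarticSum a` depends only on the class of `a` modulo fourth powers, so the second
moment is a multiple of the sum of `quarticSum (g ^ i) ^ 2` over `i < 4`, with `g` a generator of
the unit group. The term `i = 2` vanishes, and `i = 1` and `i = 3` agree. -/
theorem exists_quarticSum_repr (hq : Fintype.card F % 8 = 1) :
    ∃ A B : ℤ, quarticSum (1 : F) = 4 * A ∧ (Fintype.card F : ℤ) = A ^ 2 + 2 * B ^ 2 := by
  have hF := ringChar_ne_two_of_card hq
  obtain ⟨g, hg⟩ := IsCyclic.exists_generator (α := Fˣ)
  obtain ⟨N, hN⟩ : ∃ N, Fintype.card F = 4 * N + 1 := ⟨Fintype.card F / 4, by omega⟩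
  have hNpos : 0 < N := by
    have := Fintype.one_lt_card (α := F); omega
  have hgen := quadraticChar_generator hF hg
  have hg0 : (g : F) ≠ 0 := g.ne_zero
  obtain ⟨A, hA⟩ := four_dvd_quarticSum hq (1 : F)
  obtain ⟨B, hB⟩ := four_dvd_quarticSum hq (g : F)
  refine ⟨A, B, hA, ?_⟩
  have hS := sum_quarticSum_sq hq
  rw [sum_eq_sum_range_generator hg _ (by rw [quarticSum_zero hF]; rfl), hN, Nat.add_sub_cancel,
    sum_range_periodic (fun k => quarticSum ((g : F) ^ k) ^ 2) 4 N] at hS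
  · have hS2 : quarticSum ((g : F) ^ 2) = 0 := by
      have h1 := quarticSum_inv ((g : F) ^ 2) (pow_ne_zero _ hg0)
      rw [quadraticChar_sq_one' hg0, one_mul] at h1
      have h2 := quarticSum_mul_pow_four ((g : F) ^ 2)⁻¹ (g : F) hg0
      rw [show ((g : F) ^ 2)⁻¹ * (g : F) ^ 4 = (g : F) ^ 2 by field_simp, hgen, ← h1] at h2
      linarith
    have hS3 : quarticSum ((g : F) ^ 3) = quarticSum (g : F) := by
      have h1 := quarticSum_inv (g : F) hg0
      have h2 := quarticSum_mul_pow_four (g : F)⁻¹ (g : F) hg0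
      rw [show (g : F)⁻¹ * (g : F) ^ 4 = (g : F) ^ 3 by field_simp] at h2
      rw [h2, h1]
    simp only [Finset.sum_range_succ, Finset.sum_range_zero, pow_zero, pow_one, hS2, hS3, hA,
      hB] at hS
    have hN' : (16 * N : ℤ) ≠ 0 := by positivity
    apply mul_left_cancel₀ hN'
    rw [hN]
    push_cast at hS ⊢
    linear_combination - hS
  · intro k
    rw [pow_add, quarticSum_mul_pow_four _ _ hg0, hgen]
    ring

/-- The sum `quarticSum 1` in the characteristic of `F`, obtained by expanding Euler's criterion
`η(t) = t ^ ((q - 1) / 2)` and using the values of power sums over `F`. -/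
theorem quarticSum_one_cast {M : ℕ} (hM : Fintype.card F = 8 * M + 1) :
    ((quarticSum (1 : F) : ℤ) : F) = -2 * ((4 * M).choose M : F) := by
  have hF := ringChar_ne_two_of_card (F := F) (by omega)
  have hMpos : 0 < M := by
    have := Fintype.one_lt_card (α := F); omega
  have h1 : ((quarticSum (1 : F) : ℤ) : F) = ∑ k ∈ Finset.range (4 * M + 1),
      ((4 * M).choose k : F) * ∑ x : F, x ^ (4 * M + 4 * k) := by
    unfold quarticSum
    push_cast
    simp_rw [quadraticChar_eq_pow_of_char_ne_two' hF, hM, show (8 * M + 1) / 2 = 4 * M by omega,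
      add_pow, Finset.mul_sum]
    rw [Finset.sum_comm]
    refine Finset.sum_congr rfl fun k _ => Finset.sum_congr rfl fun x _ => ?_
    rw [pow_add, pow_mul x 4 k]
    simp
    ring
  have h2 : ∀ e, 0 < e → ∑ x : F, x ^ e = if 8 * M ∣ e then -1 else 0 := by
    intro e he
    have h := FiniteField.sum_pow_units F e
    rw [hM, Nat.add_sub_cancel] at h
    rw [← h]
    symm
    apply Finset.sum_of_injOn (fun u : Fˣ => (u : F))
    · intro a _ b _ h; exact Units.ext h
    · intro x _; simp
    · intro x _ hx
      by_cases hx0 : x = 0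
      · rw [hx0, zero_pow he.ne']
      · exact absurd ⟨Units.mk0 x hx0, by simp⟩ hx
    · intros; simp
  -- among the exponents `4M, …, 20M` only `8M` and `16M` are divisible by `q - 1`
  rw [h1, ← Finset.sum_subset (s₁ := {M, 3 * M})]
  · rw [Finset.sum_pair (by omega), h2 _ (by omega), h2 _ (by omega), if_pos ⟨1, by ring⟩,
      if_pos ⟨2, by ring⟩, ← Nat.choose_symm (show M ≤ 4 * M by omega),
      show 4 * M - M = 3 * M by omega]
    ring
  · intro k; simp only [Finset.mem_insert, Finset.mem_singleton, Finset.mem_range]; omega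
  · intro k hk hk'
    simp only [Finset.mem_insert, Finset.mem_singleton, Finset.mem_range] at hk hk'
    rw [h2 _ (by omega), if_neg, mul_zero]
    rintro ⟨t, ht⟩
    have : k = M * (2 * t - 1) := by
      rcases t with _ | t
      · omega
      · rw [show 2 * (t + 1) - 1 = 2 * t + 1 by omega]; linarith
    have ht3 : t < 3 := by
      by_contra! h
      have : 8 * M * 3 ≤ 8 * M * t := Nat.mul_le_mul_left _ h
      omega
    interval_cases t <;> omega

/-- A finite field with `q = 8M + 1` elements yields `q = A² + 2B²` with
`2A = -C(4M, M)` in the field. -/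
theorem exists_repr {M : ℕ} (hM : Fintype.card F = 8 * M + 1) :
    ∃ A B : ℤ, (Fintype.card F : ℤ) = A ^ 2 + 2 * B ^ 2 ∧
      2 * (A : F) = -((4 * M).choose M : F) := by
  obtain ⟨A, B, hA, hAB⟩ := exists_quarticSum_repr (F := F) (by omega)
  have hF := ringChar_ne_two_of_card (F := F) (by omega)
  have h2 : (2 : F) ≠ 0 := Ring.two_ne_zero hF
  refine ⟨A, B, hAB, mul_left_cancel₀ h2 ?_⟩
  have := quarticSum_one_cast hM
  rw [hA] at this
  push_cast at this
  linear_combination this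

end FiniteField

/-! ### The binomial coefficient modulo `p` -/

/-- A prime has at most one representation `x² + 2y²` up to signs. -/
theorem repr_unique {p : ℕ} (hp : p.Prime) {c d x y : ℤ} (h1 : (p : ℤ) = c ^ 2 + 2 * d ^ 2)
    (h2 : (p : ℤ) = x ^ 2 + 2 * y ^ 2) : x ^ 2 = c ^ 2 ∧ y ^ 2 = d ^ 2 := by
  have hpp : Prime (p : ℤ) := Nat.prime_iff_prime_int.1 hp
  have hp0 : (p : ℤ) ≠ 0 := hpp.ne_zero
  -- a multiple of `p` whose doubled square is at most `p ^ 2` vanishes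
  have small : ∀ u v : ℤ, (p : ℤ) ^ 2 = u ^ 2 + 2 * v ^ 2 → (p : ℤ) ∣ v → v = 0 := by
    rintro u v h ⟨t, rfl⟩
    have hle : (p : ℤ) ^ 2 * (2 * t ^ 2) ≤ (p : ℤ) ^ 2 * 1 := by nlinarith [sq_nonneg u]
    have := le_of_mul_le_mul_left hle (by positivity)
    have ht : t = 0 := by
      by_contra h0
      have : 0 < t ^ 2 := by positivity
      omega
    rw [ht, mul_zero]
  have hprod : (x * d - c * y) * (x * d + c * y) = p * (d ^ 2 - y ^ 2) := by
    linear_combination (-d ^ 2) * h2 + y ^ 2 * h1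
  have hzero : (x * d - c * y) * (x * d + c * y) = 0 := by
    rcases hpp.dvd_or_dvd (Dvd.intro _ hprod.symm) with h | h
    · rw [small (x * c + 2 * y * d) _ _ h, zero_mul]
      linear_combination p * h2 + (x ^ 2 + 2 * y ^ 2) * h1
    · rw [small (x * c - 2 * y * d) _ _ h, mul_zero]
      linear_combination p * h2 + (x ^ 2 + 2 * y ^ 2) * h1
  rw [hzero] at hprod
  have hy : d ^ 2 - y ^ 2 = 0 := by
    rcases mul_eq_zero.1 hprod.symm with h | h
    · exact absurd h hp0
    · exact h
  constructor
  · linear_combination h1 - h2 + 2 * hy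
  · linear_combination - hy

/-- In `ℤ[√-2]` an element `A + B√-2` of norm `p²` with `p ∤ A` is, up to sign and conjugation,
the square of `c + d√-2`, so that `A = ±(c² - 2d²) ≡ ±2c²` modulo `p`. -/
theorem repr_sq {p : ℕ} (hp : p.Prime) (hp2 : 2 < p) {c d A B : ℤ}
    (h1 : (p : ℤ) = c ^ 2 + 2 * d ^ 2) (h2 : (p : ℤ) ^ 2 = A ^ 2 + 2 * B ^ 2)
    (hA : ¬ (p : ℤ) ∣ A) : (p : ℤ) ∣ A - 2 * c ^ 2 ∨ (p : ℤ) ∣ A + 2 * c ^ 2 := by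
  have hpp : Prime (p : ℤ) := Nat.prime_iff_prime_int.1 hp
  have hp0 : (p : ℤ) ≠ 0 := hpp.ne_zero
  have hnd2 : ¬ (p : ℤ) ∣ 2 := fun h => by
    have := Int.le_of_dvd (by norm_num) h
    omega
  have core : ∀ d : ℤ, (p : ℤ) = c ^ 2 + 2 * d ^ 2 → (p : ℤ) ∣ A * c + 2 * B * d →
      (p : ℤ) ∣ A - 2 * c ^ 2 ∨ (p : ℤ) ∣ A + 2 * c ^ 2 := by
    rintro d h1 ⟨X, hX⟩
    -- `(A + B√-2)(c - d√-2) = p (X - Y√-2)`, where `X² + 2Y² = p`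
    have hW : (p : ℤ) ∣ A * d - B * c := by
      have h3 : (p : ℤ) ∣ 2 * (A * d - B * c) ^ 2 := by
        refine ⟨p * (p - X ^ 2), ?_⟩
        linear_combination (-(A * c + 2 * B * d) - p * X) * hX - p ^ 2 * h1 -
          (c ^ 2 + 2 * d ^ 2) * h2
      exact hpp.dvd_of_dvd_pow ((hpp.dvd_or_dvd h3).resolve_left hnd2)
    obtain ⟨Y, hY⟩ := hW
    have hXY : (p : ℤ) = X ^ 2 + 2 * Y ^ 2 := by
      apply mul_left_cancel₀ (pow_ne_zero 2 hp0)
      linear_combination (A * c + 2 * B * d + p * X) * hX +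
        2 * (A * d - B * c + p * Y) * hY + p ^ 2 * h1 + (c ^ 2 + 2 * d ^ 2) * h2
    obtain ⟨hx, hy⟩ := repr_unique hp h1 hXY
    have hAe : A = c * X + 2 * d * Y := by
      apply mul_left_cancel₀ hp0
      linear_combination A * h1 + c * hX + 2 * d * hY
    rcases sq_eq_sq_iff_eq_or_eq_neg.1 hx with rfl | rfl <;>
      rcases sq_eq_sq_iff_eq_or_eq_neg.1 hy with rfl | rfl
    · exact absurd ⟨1, by linear_combination hAe - h1⟩ hA
    · exact Or.inl ⟨-1, by linear_combination hAe + h1⟩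
    · exact Or.inr ⟨1, by linear_combination hAe - h1⟩
    · exact absurd ⟨-1, by linear_combination hAe + h1⟩ hA
  have hprod : (p : ℤ) ∣ (A * c + 2 * B * d) * (A * c + 2 * B * (-d)) := by
    refine ⟨A ^ 2 - 2 * d ^ 2 * p, ?_⟩
    linear_combination (-A ^ 2) * h1 + 2 * d ^ 2 * h2
  rcases hpp.dvd_or_dvd hprod with h | h
  · exact core d h1 h
  · exact core (-d) (by rw [neg_sq]; exact h1) h

theorem choose_sq_mod_one {p : ℕ} [Fact p.Prime] {c d : ℤ} (hcd : (p : ℤ) = c ^ 2 + 2 * d ^ 2)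
    {j : ℕ} (hj : p = 8 * j + 1) : (((4 * j).choose j : ℕ) : ZMod p) ^ 2 = 4 * (c : ZMod p) ^ 2 := by
  have hp : p.Prime := Fact.out
  obtain ⟨A, B, hAB, hA⟩ := exists_repr (F := ZMod p) (M := j) (by rw [ZMod.card]; exact hj)
  rw [ZMod.card] at hAB
  have h := congrArg (Int.cast : ℤ → ZMod p) (repr_unique hp hcd hAB).1
  push_cast at h
  linear_combination (-2 * (A : ZMod p) + ((4 * j).choose j : ZMod p)) * hA + 4 * h

theorem choose_sq_mod_three {p : ℕ} [Fact p.Prime] {c d : ℤ}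
    (hcd : (p : ℤ) = c ^ 2 + 2 * d ^ 2) {j : ℕ} (hj : p = 8 * j + 3) :
    (((4 * j + 1).choose j : ℕ) : ZMod p) ^ 2 = 4 * (c : ZMod p) ^ 2 := by
  classical
  have hp : p.Prime := Fact.out
  have hp2 : 2 < p := by omega
  have : Fintype (GaloisField p 2) := Fintype.ofFinite _
  have hcard : Fintype.card (GaloisField p 2) = p ^ 2 := by
    rw [← Nat.card_eq_fintype_card, GaloisField.card p 2 two_ne_zero]
  have hM : Fintype.card (GaloisField p 2) = 8 * (3 * j + 1 + p * j) + 1 := by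
    rw [hcard, hj]; ring
  obtain ⟨A, B, hAB, hA⟩ := exists_repr hM
  rw [hcard] at hAB
  push_cast at hAB
  have hA' : 2 * (A : ZMod p) = -(((4 * (3 * j + 1 + p * j)).choose (3 * j + 1 + p * j) : ℕ) :
      ZMod p) := by
    apply (algebraMap (ZMod p) (GaloisField p 2)).injective
    rw [map_mul, map_neg, map_ofNat, map_intCast, map_natCast]
    exact hA
  have hlucas : (((4 * (3 * j + 1 + p * j)).choose (3 * j + 1 + p * j) : ℕ) : ZMod p) =
      (((4 * j + 1).choose j : ℕ) : ZMod p) ^ 2 := by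
    have h := Choose.choose_modEq_choose_mod_mul_choose_div_nat (p := p)
      (n := 4 * (3 * j + 1 + p * j)) (k := 3 * j + 1 + p * j)
    -- the base-`p` digits of `4M` are `4j + 1, 4j + 1`, those of `M` are `3j + 1, j`
    have e : 4 * (3 * j + 1 + p * j) = (4 * j + 1) + p * (4 * j + 1) := by
      rw [hj]; ring
    rw [e, Nat.add_mul_mod_self_left, Nat.add_mul_mod_self_left, Nat.mod_eq_of_lt (by omega),
      Nat.mod_eq_of_lt (by omega), Nat.add_mul_div_left _ _ hp.pos,
      Nat.add_mul_div_left _ _ hp.pos, Nat.div_eq_of_lt (by omega), Nat.div_eq_of_lt (by omega),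
      zero_add, zero_add, ← Nat.choose_symm (show 3 * j + 1 ≤ 4 * j + 1 by omega),
      show 4 * j + 1 - (3 * j + 1) = j by omega, ← sq] at h
    rw [e]
    have := (ZMod.natCast_eq_natCast_iff _ _ _).2 h
    push_cast at this
    exact this
  rw [hlucas] at hA'
  have hchoose : (((4 * j + 1).choose j : ℕ) : ZMod p) ≠ 0 := by
    rw [Ne, ZMod.natCast_eq_zero_iff]
    intro h
    have h' : p ∣ (4 * j + 1).factorial := by
      rw [← Nat.choose_mul_factorial_mul_factorial (show j ≤ 4 * j + 1 by omega), mul_assoc]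
      exact h.mul_right _
    rw [hp.dvd_factorial] at h'
    omega
  have hnA : ¬ (p : ℤ) ∣ A := by
    intro h
    rw [← ZMod.intCast_zmod_eq_zero_iff_dvd] at h
    rw [h, mul_zero] at hA'
    exact pow_ne_zero 2 hchoose (neg_eq_zero.1 hA'.symm)
  rcases repr_sq hp hp2 hcd hAB hnA with h | h
  · -- here `-1` would be a square modulo `p`, which is impossible for `p ≡ 3 (mod 4)`
    exfalso
    rw [← ZMod.intCast_zmod_eq_zero_iff_dvd] at h
    push_cast at h
    have hc : 2 * (c : ZMod p) ≠ 0 := by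
      intro hc
      apply pow_ne_zero 2 hchoose
      linear_combination hA' - 2 * h - 2 * c * hc
    have hneg : IsSquare (-1 : ZMod p) := by
      refine ⟨(((4 * j + 1).choose j : ℕ) : ZMod p) / (2 * c), ?_⟩
      rw [div_mul_div_comm, eq_div_iff (mul_ne_zero hc hc)]
      linear_combination 2 * h - hA'
    rw [ZMod.exists_sq_eq_neg_one_iff] at hneg
    omega
  · rw [← ZMod.intCast_zmod_eq_zero_iff_dvd] at h
    push_cast at h
    linear_combination hA' - 2 * h

/-! ### Prime powers -/

/-- The Lucas congruence for `D`. -/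
theorem apD_lucas {p : ℕ} [Fact p.Prime] (n a : ℕ) (hn : n < p) :
    (apD (n + p * a) : ZMod p) = apD n * apD a := by
  have hp : p.Prime := Fact.out
  have ext : ∀ m N : ℕ, m < N →
      (apD m : ZMod p) = ∑ k ∈ Finset.range N, (m.choose k : ZMod p) ^ 3 := by
    intro m N h
    rw [apD]
    push_cast
    apply Finset.sum_subset
    · intro i; simp only [Finset.mem_range]; omega
    · intro i _ hi
      rw [Finset.mem_range] at hi
      rw [Nat.choose_eq_zero_of_lt (by omega)]; simp
  have split : ∀ (f : ℕ → ZMod p) (t : ℕ), ∑ k ∈ Finset.range (p * t), f k =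
      ∑ s ∈ Finset.range t, ∑ k ∈ Finset.range p, f (k + p * s) := by
    intro f t
    induction t with
    | zero => simp
    | succ t ih =>
      rw [Nat.mul_succ, Finset.sum_range_add, ih, Finset.sum_range_succ]
      simp_rw [add_comm (p * t)]
  rw [ext (n + p * a) (p * (a + 1)) (by rw [Nat.mul_succ]; omega), split, ext n p hn,
    ext a (a + 1) (by omega), Finset.sum_mul_sum, Finset.sum_comm]
  refine Finset.sum_congr rfl fun k hk => Finset.sum_congr rfl fun s _ => ?_
  rw [Finset.mem_range] at hk
  have h := Choose.choose_modEq_choose_mod_mul_choose_div_nat (p := p)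
      (n := n + p * a) (k := k + p * s)
  rw [Nat.add_mul_mod_self_left, Nat.add_mul_mod_self_left, Nat.mod_eq_of_lt hn,
    Nat.mod_eq_of_lt hk, Nat.add_mul_div_left _ _ hp.pos, Nat.add_mul_div_left _ _ hp.pos,
    Nat.div_eq_of_lt hn, Nat.div_eq_of_lt hk, zero_add, zero_add] at h
  have h' := (ZMod.natCast_eq_natCast_iff _ _ _).2 h
  push_cast at h'
  rw [h']
  ring

theorem apD_half_pow_mod {p : ℕ} [Fact p.Prime] {n : ℕ} (hn : 2 * n + 1 = p) (r : ℕ) :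
    (-1) ^ ((p ^ r - 1) / 2) * (apD ((p ^ r - 1) / 2) : ZMod p) =
      ((-1) ^ n * (apD n : ZMod p)) ^ r := by
  induction r with
  | zero => simp [apD]
  | succ r ih =>
    have hpos : 0 < p ^ r := pow_pos (by omega) r
    have hodd : p ^ r % 2 = 1 := by
      rw [← Nat.odd_iff]; exact Odd.pow ⟨n, hn.symm⟩
    have e : (p ^ (r + 1) - 1) / 2 = n + p * ((p ^ r - 1) / 2) := by
      obtain ⟨a, ha⟩ : ∃ a, p ^ r = 2 * a + 1 := ⟨p ^ r / 2, by omega⟩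
      rw [pow_succ, ha, show (2 * a + 1 - 1) / 2 = a by omega]
      have : (2 * a + 1) * p = 2 * (n + p * a) + 1 := by rw [← hn]; ring
      omega
    have hp1 : (-1 : ZMod p) ^ p = -1 := Odd.neg_one_pow ⟨n, hn.symm⟩
    rw [e, apD_lucas _ _ (by omega), pow_add, pow_mul, hp1, pow_succ, ← ih]
    ring

/-- The trace `(c + d√-2) ^ (2r) + (c - d√-2) ^ (2r)` is an integer congruent to `(2c) ^ (2r)`
modulo the norm `p`; two consecutive values are needed for the recurrence. -/
theorem trace_mod (p : ℕ) (c d : ℤ) (s : ℂ) (hs : s ^ 2 = -2)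
    (hcd : (p : ℤ) = c ^ 2 + 2 * d ^ 2) (r : ℕ) :
    ∃ u v : ℤ, (u : ℂ) = ((c : ℂ) + d * s) ^ (2 * (r + 1)) + ((c : ℂ) - d * s) ^ (2 * (r + 1)) ∧
      (v : ℂ) = ((c : ℂ) + d * s) ^ (2 * (r + 2)) + ((c : ℂ) - d * s) ^ (2 * (r + 2)) ∧
      (u : ZMod p) = (4 * (c : ZMod p) ^ 2) ^ (r + 1) ∧
      (v : ZMod p) = (4 * (c : ZMod p) ^ 2) ^ (r + 2) := by
  have hp0 : (0 : ZMod p) = (c : ZMod p) ^ 2 + 2 * (d : ZMod p) ^ 2 := by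
    have := congrArg (Int.cast : ℤ → ZMod p) hcd
    push_cast at this
    simpa using this
  induction r with
  | zero =>
    refine ⟨2 * c ^ 2 - 4 * d ^ 2, (2 * c ^ 2 - 4 * d ^ 2) ^ 2 - 2 * (c ^ 2 + 2 * d ^ 2) ^ 2,
      ?_, ?_, ?_, ?_⟩
    · push_cast; linear_combination (-2 * (d : ℂ) ^ 2) * hs
    · push_cast
      linear_combination (-12 * (c : ℂ) ^ 2 * d ^ 2 - 2 * (d : ℂ) ^ 4 * (s ^ 2 - 2)) * hs
    · push_cast; linear_combination 2 * hp0
    · push_cast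
      rw [← hp0, show (2 * (c : ZMod p) ^ 2 - 4 * (d : ZMod p) ^ 2) = 4 * (c : ZMod p) ^ 2 by
        linear_combination 2 * hp0]
      ring
  | succ r ih =>
    obtain ⟨u, v, hu, hv, hu', hv'⟩ := ih
    refine ⟨v, (2 * c ^ 2 - 4 * d ^ 2) * v - (c ^ 2 + 2 * d ^ 2) ^ 2 * u, hv, ?_, hv', ?_⟩
    · push_cast
      have e1 : 2 * (c : ℂ) ^ 2 - 4 * (d : ℂ) ^ 2 = (c + d * s) ^ 2 + (c - d * s) ^ 2 := by
        linear_combination (-2 * (d : ℂ) ^ 2) * hs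
      have e2 : (c : ℂ) ^ 2 + 2 * (d : ℂ) ^ 2 = (c + d * s) * (c - d * s) := by
        linear_combination ((d : ℂ) ^ 2) * hs
      rw [hu, hv, e1, e2]
      ring
    · push_cast
      rw [← hp0, hv', show (2 * (c : ZMod p) ^ 2 - 4 * (d : ZMod p) ^ 2) = 4 * (c : ZMod p) ^ 2 by
        linear_combination 2 * hp0]
      ring

/-- Theorem 1.8 (case `p ≡ 1, 3 (mod 8)`):
`(−1)^((p^r−1)/2) D((p^r−1)/2) ≡ β_{2r+1}(p) (mod p)`, where
`β_{2r+1}(p) = (c + d√−2)^(2r) + (c − d√−2)^(2r)`. -/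
theorem apD_congruence (p : ℕ) (hp : p.Prime) (hp2 : 2 < p) (hp8 : p % 8 = 1 ∨ p % 8 = 3)
    (c d : ℤ) (hcd : (p : ℤ) = c ^ 2 + 2 * d ^ 2)
    (r : ℕ) (hr : 1 ≤ r) (g : ℤ)
    (hg : (g : ℂ) = ((c : ℂ) + d * (Complex.I * Real.sqrt 2)) ^ (2 * r) +
      ((c : ℂ) - d * (Complex.I * Real.sqrt 2)) ^ (2 * r)) :
    (-1 : ℤ) ^ ((p ^ r - 1) / 2) * apD ((p ^ r - 1) / 2) ≡ g [ZMOD (p : ℤ)] := by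
  have : Fact p.Prime := ⟨hp⟩
  obtain ⟨n, hn⟩ : ∃ n, 2 * n + 1 = p := ⟨p / 2, by omega⟩
  have hbase : (-1) ^ n * (apD n : ZMod p) = 4 * (c : ZMod p) ^ 2 := by
    rcases hp8 with h | h
    · rw [apD_half_mod hn (j := p / 8) (by omega) (Or.inl h),
        ← choose_sq_mod_one hcd (j := p / 8) (by omega), show n = 4 * (p / 8) by omega]
    · rw [apD_half_mod hn (j := p / 8) (by omega) (Or.inr h),
        ← choose_sq_mod_three hcd (j := p / 8) (by omega), show n = 4 * (p / 8) + 1 by omega]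
  have hs : (Complex.I * (Real.sqrt 2 : ℂ)) ^ 2 = -2 := by
    rw [mul_pow, Complex.I_sq, ← Complex.ofReal_pow, Real.sq_sqrt (by norm_num)]
    norm_num
  obtain ⟨s, rfl⟩ : ∃ s, r = s + 1 := ⟨r - 1, by omega⟩
  obtain ⟨u, -, hu, -, hu', -⟩ := trace_mod p c d _ hs hcd s
  have hgu : g = u := by
    rw [← hu] at hg
    exact_mod_cast hg
  rw [← ZMod.intCast_eq_intCast_iff]
  push_cast
  rw [apD_half_pow_mod hn, hbase, hgu, hu']
end

section
/- Let p > 2 be a prime. Then for every integer r ≥ 1: D((p^r − 1)/2) ≡ D((p − 1)/2)^r (mod p). -/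
/-- The upper limit in the sum defining `apD n` may be any bound beyond `n`, because the additional
binomial coefficients vanish. -/
lemma apD_eq_sum_range {n N : ℕ} (h : n < N) :
    apD n = ∑ k ∈ Finset.range N, (n.choose k : ℤ) ^ 3 := by
  refine Finset.sum_subset (Finset.range_subset_range.2 h) fun k _ hk => ?_
  rw [Nat.choose_eq_zero_of_lt (by simpa using hk)]
  simp

lemma sum_range_mul_eq (f : ℕ → ℤ) (p m : ℕ) :
    ∑ k ∈ Finset.range (p * m), f k
      = ∑ j ∈ Finset.range m, ∑ i ∈ Finset.range p, f (i + p * j) := by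
  induction m with
  | zero => simp
  | succ m ih =>
    rw [Finset.sum_range_succ, ← ih, Nat.mul_succ, Finset.sum_range_add]
    simp only [Nat.add_comm]

/-- The Lucas congruence for `D`. -/
lemma apD_add_mul_modEq {p : ℕ} (hp : p.Prime) {a : ℕ} (ha : a < p) (m : ℕ) :
    apD (a + p * m) ≡ apD a * apD m [ZMOD (p : ℤ)] := by
  have := Fact.mk hp
  have hlt : a + p * m < p * (m + 1) := by rw [Nat.mul_succ]; omega
  rw [apD_eq_sum_range hlt, apD_eq_sum_range ha, apD_eq_sum_range (Nat.lt_succ_self m),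
    sum_range_mul_eq, Finset.sum_mul_sum, Finset.sum_comm]
  refine Int.ModEq.sum fun i hi => Int.ModEq.sum fun j _ => ?_
  have hi : i < p := Finset.mem_range.1 hi
  have h := Choose.choose_modEq_choose_mod_mul_choose_div (p := p) (n := a + p * m) (k := i + p * j)
  rw [Nat.add_mul_mod_self_left, Nat.add_mul_mod_self_left, Nat.mod_eq_of_lt ha,
    Nat.mod_eq_of_lt hi, Nat.add_mul_div_left _ _ hp.pos, Nat.add_mul_div_left _ _ hp.pos,
    Nat.div_eq_of_lt ha, Nat.div_eq_of_lt hi, Nat.zero_add, Nat.zero_add] at h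
  rw [← mul_pow]
  exact_mod_cast h.pow 3

/-- The last base-`p` digit of `(p ^ (r + 1) - 1) / 2` is `(p - 1) / 2`, and removing it leaves
`(p ^ r - 1) / 2`. -/
lemma half_pow_succ {p : ℕ} (hp : Odd p) (r : ℕ) :
    (p ^ (r + 1) - 1) / 2 = (p - 1) / 2 + p * ((p ^ r - 1) / 2) := by
  obtain ⟨s, hs⟩ := hp.pow (n := r)
  obtain ⟨t, rfl⟩ := hp
  have h : (2 * t + 1) ^ (r + 1) = 2 * (t + (2 * t + 1) * s) + 1 := by
    rw [pow_succ, hs]; ring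
  rw [h, hs]
  simp

/-- For odd primes `p`: `D((p^r−1)/2) ≡ D((p−1)/2)^r (mod p)`. -/
theorem apD_pow_congruence (p : ℕ) (hp : p.Prime) (hp2 : 2 < p)
    (r : ℕ) (hr : 1 ≤ r) :
    apD ((p ^ r - 1) / 2) ≡ apD ((p - 1) / 2) ^ r [ZMOD (p : ℤ)] := by
  clear hr
  induction r with
  | zero => simp [apD]
  | succ r ih =>
    rw [half_pow_succ (hp.odd_of_ne_two hp2.ne'), pow_succ']
    exact (apD_add_mul_modEq hp (by omega) _).trans (ih.mul_left _)
end
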